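/- arXiv:2506.06933 — 4 statements merged into one kernel-verified Lean document; each statement's English description precedes it below -/
import Mathlib

section
/- Let c ≥ 1 be a real number and let C : [1,∞) → ℝ satisfy: (i) C(m) ≤ c + m/2 for all m ∈ [1, c+1]; and (ii) C(m) = (1/(c+1))·(C(m/(c+1)) + c) + (c/(c+1))·(C(c·m/(c+1)) + 1) for all m > c+1. Then C(m) ≤ 2c·⌈log_{c+1} m⌉ for all m > 1. -/
/-!
Write `L` for `⌈log_{c+1} m⌉`. One query costs `2c / (c + 1)` in expectation. With probability
`1 / (c + 1)` the surviving interval is `c + 1` times shorter, which lowers `L` by exactly one and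
hence the bound `2 c L` by `2c`; so the query is paid for by the expected drop of the bound. As
`c ≥ 1`, for `m > c + 1` both candidate intervals have length between `1` and `c / (c + 1) * m`, so
the recursion reaches the base range after finitely many steps.
-/

theorem forall_gt_of_contraction {𝕜 : Type*} [Field 𝕜] [LinearOrder 𝕜] [IsStrictOrderedRing 𝕜]
    [Archimedean 𝕜] {a q : 𝕜} {P : 𝕜 → Prop} (ha : 0 < a) (hq₀ : 0 ≤ q) (hq₁ : q < 1)
    (step : ∀ m, a < m → (∀ k, a < k → k ≤ q * m → P k) → P m) :
    ∀ m, a < m → P m := by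
  have of_pow_mul_le (n : ℕ) : ∀ m, a < m → q ^ n * m ≤ a → P m := by
    induction n with
    | zero => exact fun m hm hle ↦ absurd hm (not_lt.mpr (by simpa using hle))
    | succ n ih =>
      refine fun m hm hle ↦ step m hm fun k hk hkm ↦ ih k hk ?_
      calc q ^ n * k ≤ q ^ n * (q * m) := by gcongr
        _ = q ^ (n + 1) * m := by ring
        _ ≤ a := hle
  intro m hm
  have hm₀ : 0 < m := ha.trans hm
  obtain ⟨n, hn⟩ := exists_pow_lt_of_lt_one (div_pos ha hm₀) hq₁
  exact of_pow_mul_le n m hm ((lt_div_iff₀ hm₀).mp hn).le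

theorem ceil_logb_div_base {b x : ℝ} (hb : 1 < b) (hx : x ≠ 0) :
    ⌈Real.logb b (x / b)⌉ = ⌈Real.logb b x⌉ - 1 := by
  rw [Real.logb_div hx (by positivity), Real.logb_self_eq_one hb, Int.ceil_sub_one]

theorem le_mul_ceil_logb_of_recurrence {f : ℝ → ℝ} {b p q K : ℝ} (hb : 1 < b) (hq : q < 1)
    (hqb : 1 ≤ q * b) (hp₀ : 0 ≤ p) (hp₁ : p ≤ 1) (hK : 0 ≤ K)
    (hbase : ∀ m, 1 < m → m ≤ b → f m ≤ K)
    (hrec : ∀ m, b < m → f m ≤ p * f (m / b) + (1 - p) * f (q * m) + p * K) :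
    ∀ m, 1 < m → f m ≤ K * ⌈Real.logb b m⌉ := by
  have hb₀ : 0 < b := by positivity
  have hq₀ : 0 < q := pos_of_mul_pos_left (one_pos.trans_le hqb) hb₀.le
  refine forall_gt_of_contraction one_pos hq₀.le hq fun m hm ih ↦ ?_
  have hm₀ : 0 < m := one_pos.trans hm
  rcases le_or_gt m b with hmb | hbm
  · have one_le_ceil : (1 : ℝ) ≤ ⌈Real.logb b m⌉ := by
      exact_mod_cast Int.one_le_ceil_iff.mpr (Real.logb_pos hb hm)
    exact (hbase m hm hmb).trans (le_mul_of_one_le_right hK one_le_ceil)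
  · have short_gt_one : 1 < m / b := (one_lt_div hb₀).mpr hbm
    have div_le_mul : m / b ≤ q * m := by
      rw [div_le_iff₀ hb₀, mul_right_comm]
      exact le_mul_of_one_le_left hm₀.le hqb
    have short : f (m / b) ≤ K * (⌈Real.logb b m⌉ - 1) := by
      simpa [ceil_logb_div_base hb hm₀.ne'] using ih _ short_gt_one div_le_mul
    have long : f (q * m) ≤ K * ⌈Real.logb b m⌉ := by
      refine (ih _ (short_gt_one.trans_le div_le_mul) le_rfl).trans ?_
      gcongr
      exact mul_le_of_le_one_left hm₀.le hq.le
    calc f m ≤ p * f (m / b) + (1 - p) * f (q * m) + p * K := hrec m hbm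
      _ ≤ p * (K * (⌈Real.logb b m⌉ - 1)) + (1 - p) * (K * ⌈Real.logb b m⌉) + p * K := by
        gcongr
      _ = K * ⌈Real.logb b m⌉ := by ring

/-- **Cost Analysis of Asymmetric Search.**
If `c ≥ 1` and `C : ℝ → ℝ` satisfies the line-search base bound
`C m ≤ c + m / 2` on `[1, c+1]` and the asymmetric-search recurrence
for `m > c + 1`, then `C m ≤ 2 c ⌈log_{c+1} m⌉` for all `m > 1`. -/
theorem asymmetric_search_cost
    (c : ℝ) (hc : 1 ≤ c) (C : ℝ → ℝ)
    (hbase : ∀ m : ℝ, 1 ≤ m → m ≤ c + 1 → C m ≤ c + m / 2)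
    (hrec : ∀ m : ℝ, c + 1 < m →
      C m = (1 / (c + 1)) * (C (m / (c + 1)) + c)
          + (c / (c + 1)) * (C (c * m / (c + 1)) + 1)) :
    ∀ m : ℝ, 1 < m → C m ≤ 2 * c * (⌈Real.logb (c + 1) m⌉ : ℝ) := by
  have hc₁ : 0 < c + 1 := by positivity
  have split_lt_one : c / (c + 1) < 1 := (div_lt_one hc₁).mpr (lt_add_one c)
  have one_le_split : 1 ≤ c / (c + 1) * (c + 1) := by rwa [div_mul_cancel₀ c hc₁.ne']
  have weight_le_one : 1 / (c + 1) ≤ 1 := (div_le_one hc₁).mpr (by linarith)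
  refine le_mul_ceil_logb_of_recurrence (by linarith) split_lt_one one_le_split (by positivity)
    weight_le_one (by positivity) (fun m hm hmc ↦ ?_) fun m hm ↦ le_of_eq ?_
  · linarith [hbase m hm.le hmc]
  · rw [hrec m hm, mul_div_right_comm]
    field_simp
    ring
end

section
/- Let d ≥ 2 be an integer, let g ∈ ℝ^d be a unit vector, let u be uniformly distributed on the unit sphere S^{d-1} ⊂ ℝ^d, let s ∈ [0,1], and let β ∈ [1/2, 1). Define the sampling weight function φ̂(u) = (1-β)·1{⟨g,u⟩ > -s} − β·1{⟨g,u⟩ ≤ -s}, where 1{·} is the indicator function. Then E[φ̂(u)·⟨g,u⟩] = Γ(d/2)·(1-s²)^{(d-1)/2} / (2√π·Γ((d+1)/2)); in particular this value does not depend on β. -/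
open MeasureTheory Metric Set Real
open scoped RealInnerProductSpace

/-- The uniform (normalized rotation-invariant) probability measure on the unit
sphere `S^{d-1} ⊂ ℝ^d`. -/
noncomputable def sphereUniform (d : ℕ) :
    Measure (sphere (0 : EuclideanSpace ℝ (Fin d)) 1) :=
  ((volume : Measure (EuclideanSpace ℝ (Fin d))).toSphere univ)⁻¹ •
    (volume : Measure (EuclideanSpace ℝ (Fin d))).toSphere

/-!
Let `d = dim E`. Splitting `E = ℝ g ⊕ gᗮ` and passing to polar coordinates, first in `gᗮ` and then
in the half-plane of pairs `(⟪g, x⟫, dist (x, ℝ g))`, shows that `⟪g, u⟫` is distributed as `cos θ`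
with `θ` of density proportional to `sin θ ^ (d - 2)` on `(0, π)`. The integral of `⟪g, u⟫` over the
cap `{c < ⟪g, u⟫}` is the flux of the constant field `g` through the cap, hence the volume
`vol (B ^ (d - 1)) * √(1 - c ^ 2) ^ (d - 1)` of its base ball. The flux through the whole sphere
vanishes, so a weight equal to `a` on the cap and `b` off it contributes `a - b` times this volume:
only the jump `(1 - β) - (-β) = 1` of the weight is seen.
-/

open Module
open scoped ENNReal

section PolarCoordinates

lemma lintegral_volumeIoiPow (n : ℕ) {f : ℝ → ℝ≥0∞} (hf : Measurable f) :
    ∫⁻ r, f r ∂Measure.volumeIoiPow n = ∫⁻ r in Ioi (0 : ℝ), ENNReal.ofReal (r ^ n) * f r := by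
  rw [Measure.volumeIoiPow, lintegral_withDensity_eq_lintegral_mul _ (by fun_prop) (by fun_prop)]
  exact lintegral_subtype_comap measurableSet_Ioi fun r : ℝ ↦ ENNReal.ofReal (r ^ n) * f r

lemma lintegral_pow_mul_exp_neg (n : ℕ) :
    ∫⁻ r in Ioi (0 : ℝ), ENNReal.ofReal (r ^ n) * ENNReal.ofReal (exp (-r)) = n.factorial := by
  have hconv := Real.GammaIntegral_convergent (s := n + 1) (by positivity)
  rw [← ENNReal.ofReal_natCast, ← Real.Gamma_nat_eq_factorial,
    Real.Gamma_eq_integral (by positivity), ofReal_integral_eq_lintegral_ofReal hconv]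
  · refine setLIntegral_congr_fun measurableSet_Ioi fun r (hr : 0 < r) ↦ ?_
    rw [← ENNReal.ofReal_mul (by positivity), add_sub_cancel_right, rpow_natCast, mul_comm]
  · filter_upwards [ae_restrict_mem measurableSet_Ioi] with r (hr : 0 < r) using by positivity

lemma setLIntegral_univ_prod_Ioi_eq_polarCoord (f : ℝ × ℝ → ℝ≥0∞) :
    ∫⁻ q in univ ×ˢ Ioi (0 : ℝ), f q =
      ∫⁻ p in Ioi (0 : ℝ) ×ˢ Ioo 0 π,
        ENNReal.ofReal p.1 * f (p.1 * cos p.2, p.1 * sin p.2) := by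
  have mem_upperHalfPlane_iff {p : ℝ × ℝ} (hp : p ∈ polarCoord.target) :
      polarCoord.symm p ∈ univ ×ˢ Ioi (0 : ℝ) ↔ p ∈ Ioi (0 : ℝ) ×ˢ Ioo 0 π := by
    obtain ⟨hρ : 0 < p.1, hθ⟩ := hp
    have : 0 < sin p.2 ↔ 0 < p.2 :=
      ⟨fun h ↦ not_le.1 fun hle ↦ (sin_nonpos_of_nonpos_of_neg_pi_le hle hθ.1.le).not_gt h,
        fun h ↦ sin_pos_of_pos_of_lt_pi h hθ.2⟩
    simp [hρ, this, hθ.2]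
  have subset_target : Ioi (0 : ℝ) ×ˢ Ioo 0 π ⊆ polarCoord.target :=
    prod_mono_right (Ioo_subset_Ioo_left (by linarith [pi_pos]))
  calc
    ∫⁻ q in univ ×ˢ Ioi (0 : ℝ), f q =
        ∫⁻ p in polarCoord.target,
          ENNReal.ofReal p.1 • (univ ×ˢ Ioi (0 : ℝ)).indicator f (polarCoord.symm p) := by
      rw [lintegral_comp_polarCoord_symm, lintegral_indicator (by measurability)]
    _ = ∫⁻ p in polarCoord.target, (Ioi (0 : ℝ) ×ˢ Ioo 0 π).indicator
          (fun p ↦ ENNReal.ofReal p.1 * f (p.1 * cos p.2, p.1 * sin p.2)) p := by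
      refine setLIntegral_congr_fun polarCoord.open_target.measurableSet fun p hp ↦ ?_
      simp only [indicator_apply, mem_upperHalfPlane_iff hp, smul_eq_mul, mul_ite, mul_zero]
      simp only [polarCoord_symm_apply]
    _ = _ := by
      rw [setLIntegral_indicator (by measurability), inter_eq_self_of_subset_left subset_target]

variable {E : Type*} [NormedAddCommGroup E] [NormedSpace ℝ E] [FiniteDimensional ℝ E]
  [Nontrivial E] [MeasurableSpace E] [BorelSpace E] (μ : Measure E) [μ.IsAddHaarMeasure]

theorem lintegral_eq_lintegral_toSphere_lintegral_Ioi {f : E → ℝ≥0∞} (hf : Measurable f) :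
    ∫⁻ x, f x ∂μ =
      ∫⁻ u, (∫⁻ r in Ioi (0 : ℝ), ENNReal.ofReal (r ^ (finrank ℝ E - 1)) * f (r • (u : E)))
        ∂μ.toSphere :=
  calc
    ∫⁻ x, f x ∂μ = ∫⁻ x : ({0}ᶜ : Set E), f x ∂μ.comap (↑) := by
      rw [lintegral_subtype_comap (measurableSet_singleton _).compl, restrict_compl_singleton]
    _ = ∫⁻ p, f (p.2.1 • p.1.1) ∂μ.toSphere.prod (.volumeIoiPow (finrank ℝ E - 1)) := by
      rw [← μ.measurePreserving_homeomorphUnitSphereProd.lintegral_comp_emb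
        (Homeomorph.measurableEmbedding _)]
      refine lintegral_congr fun x ↦ ?_
      have hx : ‖x.1‖ ≠ 0 := norm_ne_zero_iff.2 x.2
      simp [hx]
    _ = ∫⁻ u, ∫⁻ r, f (r.1 • u.1) ∂.volumeIoiPow (finrank ℝ E - 1) ∂μ.toSphere :=
      lintegral_prod _ (by fun_prop)
    _ = _ := lintegral_congr fun u ↦
      lintegral_volumeIoiPow (finrank ℝ E - 1) (f := fun r ↦ f (r • u.1)) (by fun_prop)

lemma lintegral_comp_norm_addHaar {f : ℝ → ℝ≥0∞} (hf : Measurable f) :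
    ∫⁻ x, f ‖x‖ ∂μ =
      μ.toSphere univ * ∫⁻ r in Ioi (0 : ℝ), ENNReal.ofReal (r ^ (finrank ℝ E - 1)) * f r := by
  rw [lintegral_eq_lintegral_toSphere_lintegral_Ioi μ (by fun_prop), mul_comm, ← lintegral_const]
  refine lintegral_congr fun u ↦ setLIntegral_congr_fun measurableSet_Ioi fun r (hr : 0 < r) ↦ ?_
  rw [norm_smul, norm_eq_of_mem_sphere u, mul_one, norm_of_nonneg hr.le]

lemma lintegral_comp_inv_norm_smul_mul_exp_neg_norm {f : E → ℝ≥0∞} (hf : Measurable f) :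
    ∫⁻ x, f (‖x‖⁻¹ • x) * ENNReal.ofReal (exp (-‖x‖)) ∂μ =
      (∫⁻ u, f u ∂μ.toSphere) * (finrank ℝ E - 1).factorial := by
  rw [lintegral_eq_lintegral_toSphere_lintegral_Ioi μ (by fun_prop),
    ← lintegral_mul_const _ (by fun_prop), ← lintegral_pow_mul_exp_neg]
  refine lintegral_congr fun u ↦ ?_
  rw [← lintegral_const_mul _ (by fun_prop)]
  refine setLIntegral_congr_fun measurableSet_Ioi fun r (hr : 0 < r) ↦ ?_
  simp only [norm_smul, norm_eq_of_mem_sphere u, norm_of_nonneg hr.le, mul_one,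
    inv_smul_smul₀ hr.ne']
  exact mul_left_comm _ _ _

end PolarCoordinates

lemma integral_sin_pow_mul_cos (n : ℕ) (a b : ℝ) :
    ∫ θ in a..b, sin θ ^ n * cos θ = (sin b ^ (n + 1) - sin a ^ (n + 1)) / (n + 1) := by
  simpa using integral_sin_pow_mul_cos_pow_odd (a := a) (b := b) n 0

lemma integral_sin_pow_mul_ite_lt_cos (n : ℕ) {c : ℝ} (hc : c ∈ Icc (-1) 1) (a b : ℝ) :
    ∫ θ in 0..π, sin θ ^ n * ((if c < cos θ then a else b) * cos θ) =
      (a - b) * (√(1 - c ^ 2) ^ (n + 1) / (n + 1)) := by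
  set f : ℝ → ℝ := fun θ ↦ sin θ ^ n * ((if c < cos θ then a else b) * cos θ)
  have lt_cos_iff {θ : ℝ} (hθ : θ ∈ Icc 0 π) : c < cos θ ↔ θ < arccos c := by
    rw [← strictAntiOn_cos.lt_iff_gt ⟨arccos_nonneg c, arccos_le_pi c⟩ hθ, cos_arccos hc.1 hc.2]
  have hcap : EqOn f (fun θ ↦ a * (sin θ ^ n * cos θ)) (uIoo 0 (arccos c)) := fun θ hθ ↦ by
    rw [uIoo_of_le (arccos_nonneg c)] at hθ
    have : c < cos θ := (lt_cos_iff ⟨hθ.1.le, hθ.2.le.trans (arccos_le_pi c)⟩).2 hθ.2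
    simp only [f, if_pos this]
    ring
  have hrest : EqOn f (fun θ ↦ b * (sin θ ^ n * cos θ)) (uIoo (arccos c) π) := fun θ hθ ↦ by
    rw [uIoo_of_le (arccos_le_pi c)] at hθ
    have : ¬c < cos θ :=
      mt (lt_cos_iff ⟨(arccos_nonneg c).trans hθ.1.le, hθ.2.le⟩).1 hθ.1.not_gt
    simp only [f, if_neg this]
    ring
  rw [← intervalIntegral.integral_add_adjacent_intervals
      ((Continuous.intervalIntegrable (by fun_prop) _ _).congr_uIoo hcap.symm)
      ((Continuous.intervalIntegrable (by fun_prop) _ _).congr_uIoo hrest.symm),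
    intervalIntegral.integral_congr_uIoo hcap, intervalIntegral.integral_congr_uIoo hrest]
  simp only [intervalIntegral.integral_const_mul, integral_sin_pow_mul_cos, sin_arccos, sin_zero,
    sin_pi, zero_pow n.succ_ne_zero]
  ring

section UnitBall

variable {E : Type*} [NormedAddCommGroup E] [InnerProductSpace ℝ E] [FiniteDimensional ℝ E]
  [Nontrivial E] [MeasurableSpace E] [BorelSpace E]

lemma volume_real_ball_zero_one :
    volume.real (ball (0 : E) 1) = √π ^ finrank ℝ E / Gamma (finrank ℝ E / 2 + 1) := by
  have : 0 < Gamma (finrank ℝ E / 2 + 1) := Gamma_pos_of_pos (by positivity)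
  rw [measureReal_def, InnerProductSpace.volume_ball, ENNReal.ofReal_one, one_pow, one_mul,
    ENNReal.toReal_ofReal (by positivity)]

lemma volume_toSphere_real_univ :
    (volume : Measure E).toSphere.real univ = 2 * √π ^ finrank ℝ E / Gamma (finrank ℝ E / 2) := by
  have hpos : 0 < (finrank ℝ E : ℝ) := by exact_mod_cast finrank_pos
  have : 0 < Gamma (finrank ℝ E / 2 : ℝ) := Gamma_pos_of_pos (by positivity)
  rw [Measure.toSphere_real_apply_univ, volume_real_ball_zero_one, Gamma_add_one (by positivity)]
  field_simp

end UnitBall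

section Zonal

variable {E : Type*} [NormedAddCommGroup E] [InnerProductSpace ℝ E] {g : E}

lemma inner_smul_add_orthogonal (hg : ‖g‖ = 1) (t : ℝ) (y : (ℝ ∙ g)ᗮ) :
    ⟪g, t • g + (y : E)⟫ = t := by
  have hy : ⟪g, (y : E)⟫ = 0 := Submodule.mem_orthogonal_singleton_iff_inner_right.1 y.2
  rw [inner_add_right, real_inner_smul_right, real_inner_self_eq_norm_sq, hg, hy]
  ring

lemma norm_smul_add_orthogonal (hg : ‖g‖ = 1) (t : ℝ) (y : (ℝ ∙ g)ᗮ) :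
    ‖t • g + (y : E)‖ = √(t ^ 2 + ‖y‖ ^ 2) := by
  have hy : ⟪g, (y : E)⟫ = 0 := Submodule.mem_orthogonal_singleton_iff_inner_right.1 y.2
  have horth : ⟪t • g, (y : E)⟫ = 0 := by rw [real_inner_smul_left, hy, mul_zero]
  rw [norm_add_eq_sqrt_iff_real_inner_eq_zero.2 horth, norm_smul, hg, Real.norm_eq_abs, mul_one,
    abs_mul_abs_self, Submodule.coe_norm, sq, sq]

variable [FiniteDimensional ℝ E]

lemma finrank_orthogonal_span_singleton_add_one (hg : g ≠ 0) :
    finrank ℝ (ℝ ∙ g)ᗮ + 1 = finrank ℝ E := by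
  rw [← (ℝ ∙ g).finrank_add_finrank_orthogonal, finrank_span_singleton hg, add_comm]

variable [MeasurableSpace E] [BorelSpace E]

lemma measurePreserving_smul_add_orthogonal (hg : ‖g‖ = 1) :
    MeasurePreserving fun p : ℝ × (ℝ ∙ g)ᗮ ↦ p.1 • g + p.2 :=
  ((ℝ ∙ g).orthogonalDecomposition.symm.measurePreserving.comp
    (WithLp.volume_preserving_toLp _ _)).comp
    ((LinearIsometryEquiv.toSpanUnitSingleton g hg).measurePreserving.prod (.id volume))

theorem lintegral_comp_inner_norm [Nontrivial (ℝ ∙ g)ᗮ] (hg : ‖g‖ = 1) {f : ℝ × ℝ → ℝ≥0∞}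
    (hf : Measurable f) :
    ∫⁻ x : E, f (⟪g, x⟫, ‖x‖) =
      (volume : Measure (ℝ ∙ g)ᗮ).toSphere univ *
        ∫⁻ p in Ioi (0 : ℝ) ×ˢ Ioo 0 π,
          ENNReal.ofReal p.1 * (ENNReal.ofReal ((p.1 * sin p.2) ^ (finrank ℝ (ℝ ∙ g)ᗮ - 1)) *
            f (p.1 * cos p.2, p.1)) := by
  set k := finrank ℝ (ℝ ∙ g)ᗮ
  calc
    ∫⁻ x : E, f (⟪g, x⟫, ‖x‖) = ∫⁻ p : ℝ × (ℝ ∙ g)ᗮ, f (p.1, √(p.1 ^ 2 + ‖p.2‖ ^ 2)) := by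
      rw [← (measurePreserving_smul_add_orthogonal hg).lintegral_comp (by fun_prop)]
      simp only [inner_smul_add_orthogonal hg, norm_smul_add_orthogonal hg]
    _ = ∫⁻ t : ℝ, ∫⁻ y : (ℝ ∙ g)ᗮ, f (t, √(t ^ 2 + ‖y‖ ^ 2)) :=
      lintegral_prod _ (by fun_prop)
    _ = ∫⁻ t : ℝ, (volume : Measure (ℝ ∙ g)ᗮ).toSphere univ *
          ∫⁻ r in Ioi (0 : ℝ), ENNReal.ofReal (r ^ (k - 1)) * f (t, √(t ^ 2 + r ^ 2)) :=
      lintegral_congr fun t ↦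
        lintegral_comp_norm_addHaar volume (f := fun r ↦ f (t, √(t ^ 2 + r ^ 2))) (by fun_prop)
    _ = (volume : Measure (ℝ ∙ g)ᗮ).toSphere univ * ∫⁻ q in univ ×ˢ Ioi (0 : ℝ),
          ENNReal.ofReal (q.2 ^ (k - 1)) * f (q.1, √(q.1 ^ 2 + q.2 ^ 2)) := by
      rw [lintegral_const_mul' _ _ (measure_ne_top _ _), Measure.volume_eq_prod,
        setLIntegral_prod _ (by fun_prop), setLIntegral_univ]
    _ = _ := by
      rw [setLIntegral_univ_prod_Ioi_eq_polarCoord]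
      congr 1
      refine setLIntegral_congr_fun (by measurability) fun p hp ↦ ?_
      have hnorm : (p.1 * cos p.2) ^ 2 + (p.1 * sin p.2) ^ 2 = p.1 ^ 2 := by
        rw [mul_pow, mul_pow, ← mul_add, cos_sq_add_sin_sq, mul_one]
      simp only [hnorm, sqrt_sq hp.1.out.le]

theorem lintegral_toSphere_comp_inner [Nontrivial (ℝ ∙ g)ᗮ] (hg : ‖g‖ = 1) {f : ℝ → ℝ≥0∞}
    (hf : Measurable f) :
    ∫⁻ u, f ⟪g, (u : E)⟫ ∂(volume : Measure E).toSphere =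
      (volume : Measure (ℝ ∙ g)ᗮ).toSphere univ *
        ∫⁻ θ in Ioo 0 π, ENNReal.ofReal (sin θ ^ (finrank ℝ (ℝ ∙ g)ᗮ - 1)) * f (cos θ) := by
  have hg₀ : g ≠ 0 := by rintro rfl; simp at hg
  have : Nontrivial E := ⟨g, 0, hg₀⟩
  obtain ⟨m, hm⟩ : ∃ m, finrank ℝ (ℝ ∙ g)ᗮ = m + 1 := Nat.exists_eq_add_one.2 finrank_pos
  have hE : finrank ℝ E - 1 = m + 1 := by
    rw [← finrank_orthogonal_span_singleton_add_one hg₀, hm, add_tsub_cancel_right]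
  have hfactorial : ((m + 1).factorial : ℝ≥0∞) ≠ 0 := by positivity
  rw [← ENNReal.mul_left_inj hfactorial (ENNReal.natCast_ne_top _), mul_assoc,
    mul_comm (∫⁻ θ in Ioo 0 π, _)]
  -- Integrate `f (⟪g, x⟫ / ‖x‖) * exp (-‖x‖)` in both coordinate systems: the radial integral
  -- is `(m + 1)!` in each.
  calc
    (∫⁻ u, f ⟪g, (u : E)⟫ ∂(volume : Measure E).toSphere) * (m + 1).factorial =
        ∫⁻ x : E, f (⟪g, x⟫ / ‖x‖) * ENNReal.ofReal (exp (-‖x‖)) := by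
      rw [← hE, ← lintegral_comp_inv_norm_smul_mul_exp_neg_norm volume (f := fun x ↦ f ⟪g, x⟫)
        (by fun_prop)]
      simp only [real_inner_smul_right, inv_mul_eq_div]
    _ = (volume : Measure (ℝ ∙ g)ᗮ).toSphere univ * ((m + 1).factorial *
          ∫⁻ θ in Ioo 0 π, ENNReal.ofReal (sin θ ^ (finrank ℝ (ℝ ∙ g)ᗮ - 1)) * f (cos θ)) := by
      rw [lintegral_comp_inner_norm hg
        (f := fun p ↦ f (p.1 / p.2) * ENNReal.ofReal (exp (-p.2))) (by fun_prop), hm,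
        ← lintegral_pow_mul_exp_neg, ← lintegral_prod_mul (by fun_prop) (by fun_prop),
        Measure.prod_restrict, ← Measure.volume_eq_prod]
      congr 1
      refine setLIntegral_congr_fun (by measurability) fun p ⟨(hρ : 0 < p.1), _⟩ ↦ ?_
      simp only [mul_div_cancel_left₀ _ hρ.ne', add_tsub_cancel_right]
      rw [mul_pow, ENNReal.ofReal_mul (pow_nonneg hρ.le _), pow_succ', ENNReal.ofReal_mul hρ.le]
      ring

theorem map_inner_toSphere [Nontrivial (ℝ ∙ g)ᗮ] (hg : ‖g‖ = 1) :
    (volume : Measure E).toSphere.map (fun u : sphere (0 : E) 1 ↦ ⟪g, (u : E)⟫) =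
      (volume : Measure (ℝ ∙ g)ᗮ).toSphere univ •
        ((volume.restrict (Ioo 0 π)).withDensity fun θ ↦
          ENNReal.ofReal (sin θ ^ (finrank ℝ (ℝ ∙ g)ᗮ - 1))).map cos := by
  refine Measure.ext_of_lintegral _ fun f hf ↦ ?_
  rw [lintegral_map hf (by fun_prop), lintegral_smul_measure, lintegral_map hf (by fun_prop),
    lintegral_withDensity_eq_lintegral_mul _ (by fun_prop) (by fun_prop),
    lintegral_toSphere_comp_inner hg hf]
  rfl

theorem integral_toSphere_comp_inner {F : Type*} [NormedAddCommGroup F] [NormedSpace ℝ F]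
    [Nontrivial (ℝ ∙ g)ᗮ] (hg : ‖g‖ = 1) {f : ℝ → F} (hf : StronglyMeasurable f) :
    ∫ u, f ⟪g, (u : E)⟫ ∂(volume : Measure E).toSphere =
      (volume : Measure (ℝ ∙ g)ᗮ).toSphere.real univ •
        ∫ θ in 0..π, sin θ ^ (finrank ℝ (ℝ ∙ g)ᗮ - 1) • f (cos θ) := by
  rw [← integral_map (φ := fun u : sphere (0 : E) 1 ↦ ⟪g, (u : E)⟫) (by fun_prop)
      hf.aestronglyMeasurable, map_inner_toSphere hg, integral_smul_measure,
    integral_map (by fun_prop) hf.aestronglyMeasurable,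
    integral_withDensity_eq_integral_toReal_smul (by fun_prop) (by simp),
    intervalIntegral.integral_of_le pi_pos.le, integral_Ioc_eq_integral_Ioo, measureReal_def]
  congr 1
  refine setIntegral_congr_fun measurableSet_Ioo fun θ hθ ↦ ?_
  have hsin : 0 ≤ sin θ := (sin_pos_of_mem_Ioo hθ).le
  simp only [ENNReal.toReal_ofReal (pow_nonneg hsin _)]

theorem integral_toSphere_ite_lt_inner [Nontrivial (ℝ ∙ g)ᗮ] (hg : ‖g‖ = 1) {c : ℝ}
    (hc : c ∈ Icc (-1) 1) (a b : ℝ) :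
    ∫ u, (if c < ⟪g, (u : E)⟫ then a else b) * ⟪g, (u : E)⟫ ∂(volume : Measure E).toSphere =
      (a - b) * (volume.real (ball (0 : (ℝ ∙ g)ᗮ) 1) *
        √(1 - c ^ 2) ^ finrank ℝ (ℝ ∙ g)ᗮ) := by
  have hmeas : Measurable fun x : ℝ ↦ (if c < x then a else b) * x :=
    (Measurable.ite measurableSet_Ioi measurable_const measurable_const).mul measurable_id
  have hpos : 0 < finrank ℝ (ℝ ∙ g)ᗮ := finrank_pos
  rw [integral_toSphere_comp_inner hg hmeas.stronglyMeasurable]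
  simp only [smul_eq_mul]
  rw [integral_sin_pow_mul_ite_lt_cos _ hc, Measure.toSphere_real_apply_univ,
    Nat.sub_add_cancel hpos, Nat.cast_pred hpos, sub_add_cancel]
  field_simp

theorem agrest_expectation_general (hd : 2 ≤ finrank ℝ E) (hg : ‖g‖ = 1) {c : ℝ}
    (hc : c ∈ Icc (-1) 1) (a b : ℝ) :
    ⨍ u, (if c < ⟪g, (u : E)⟫ then a else b) * ⟪g, (u : E)⟫ ∂(volume : Measure E).toSphere =
      (a - b) * (Gamma (finrank ℝ E / 2) * (1 - c ^ 2) ^ (((finrank ℝ E : ℝ) - 1) / 2) /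
        (2 * √π * Gamma ((finrank ℝ E + 1) / 2))) := by
  have hg₀ : g ≠ 0 := by rintro rfl; simp at hg
  have hdim := finrank_orthogonal_span_singleton_add_one hg₀
  have : Nontrivial E := ⟨g, 0, hg₀⟩
  have : Nontrivial (ℝ ∙ g)ᗮ := nontrivial_of_finrank_pos (R := ℝ) (by lia)
  have hc' : 0 ≤ 1 - c ^ 2 := by nlinarith [hc.1, hc.2]
  set k := finrank ℝ (ℝ ∙ g)ᗮ with hk
  have hsqrt : √(1 - c ^ 2) ^ k = (1 - c ^ 2) ^ ((k : ℝ) / 2) := by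
    rw [sqrt_eq_rpow, ← rpow_natCast, ← rpow_mul hc', one_div_mul_eq_div]
  have : 0 < Gamma ((k + 1 : ℝ) / 2) := Gamma_pos_of_pos (by positivity)
  have : 0 < Gamma ((k + 1 + 1 : ℝ) / 2) := Gamma_pos_of_pos (by positivity)
  have hhalf : (k : ℝ) / 2 + 1 = (k + 1 + 1) / 2 := by ring
  rw [average_eq, integral_toSphere_ite_lt_inner hg hc, volume_toSphere_real_univ,
    volume_real_ball_zero_one, ← hk, ← hdim, hsqrt, hhalf]
  push_cast
  rw [add_sub_cancel_right, smul_eq_mul]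
  field_simp
  ring

end Zonal

/-- **Key AGREST expectation (Lemma 5).** For a unit vector `g ∈ ℝ^d` (`d ≥ 2`),
`u` uniform on `S^{d-1}`, `s ∈ [0,1]` and `β ∈ [1/2, 1)`, with sampling weight
`φ̂(u) = (1-β)·1{⟨g,u⟩ > -s} − β·1{⟨g,u⟩ ≤ -s}`, we have
`E[φ̂(u)·⟨g,u⟩] = Γ(d/2)·(1-s²)^((d-1)/2) / (2√π·Γ((d+1)/2))`,
independently of `β`. -/
theorem agrest_expectation
    (d : ℕ) (hd : 2 ≤ d) (g : EuclideanSpace ℝ (Fin d)) (hg : ‖g‖ = 1)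
    (s : ℝ) (hs : s ∈ Set.Icc (0 : ℝ) 1) (β : ℝ) (hβ : β ∈ Set.Ico (1/2 : ℝ) 1) :
    (∫ u : (sphere (0 : EuclideanSpace ℝ (Fin d)) 1),
        ((if -s < ⟪g, (u : EuclideanSpace ℝ (Fin d))⟫ then (1 - β) else 0)
          - (if ⟪g, (u : EuclideanSpace ℝ (Fin d))⟫ ≤ -s then β else 0))
          * ⟪g, (u : EuclideanSpace ℝ (Fin d))⟫ ∂(sphereUniform d))
      = Real.Gamma ((d : ℝ) / 2) * (1 - s ^ 2) ^ (((d : ℝ) - 1) / 2)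
        / (2 * Real.sqrt π * Real.Gamma (((d : ℝ) + 1) / 2)) := by
  have weight_eq (x : ℝ) : (if -s < x then 1 - β else 0) - (if x ≤ -s then β else 0) =
      if -s < x then 1 - β else -β := by grind
  simpa [weight_eq, average, sphereUniform] using
    agrest_expectation_general (E := EuclideanSpace ℝ (Fin d)) (by simpa) hg
      ⟨neg_le_neg hs.2, by linarith [hs.1]⟩ (1 - β) (-β)
end

section
/- There exists a constant C > 0 such that the following holds. Let d ≥ 2 and n ≥ 1 be integers, g ∈ ℝ^d a unit vector, s ∈ [0,1], β ∈ (1/2, 1), and ε₁, ε₂ > 0. Let u₁, …, uₙ be i.i.d. uniform on S^{d-1}, set φ̂(u) = (1-β)·1{⟨g,u⟩ > -s} − β·1{⟨g,u⟩ ≤ -s}, Ĝ = (1/n)·Σ_{i=1}^n φ̂(uᵢ)uᵢ (which is nonzero almost surely), μ = E[⟨g, Ĝ⟩ / ‖Ĝ‖], A = E[φ̂(u₁)·⟨g,u₁⟩], V = E[φ̂(u₁)²], and K = n(n+1)·exp(−C·d·ε₁²) + 2·exp(−2nε₂²/(2β−1)²). If V − ε₂ − (n−1)β²ε₁ > 0,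 then μ ≤ √n·A / √(V − ε₂ − (n−1)β²ε₁) + (1 + √n·β / √(V − ε₂ − (n−1)β²ε₁))·K, and μ ≥ √n·A / √(V + ε₂ + (n−1)β²ε₁) − (1 + √n·β / √(V + ε₂ + (n−1)β²ε₁))·K. -/
open MeasureTheory Metric Set Real
open scoped RealInnerProductSpace

/-- The AGREST sampling weight function
`φ̂(u) = (1-β)·1{⟨g,u⟩ > -s} − β·1{⟨g,u⟩ ≤ -s}`. -/
noncomputable def phiHat (d : ℕ) (g : EuclideanSpace ℝ (Fin d)) (s β : ℝ)
    (u : sphere (0 : EuclideanSpace ℝ (Fin d)) 1) : ℝ :=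
  if -s < ⟪g, (u : EuclideanSpace ℝ (Fin d))⟫ then 1 - β else -β

/-- The AGREST estimator `Ĝ = (1/n)·Σᵢ φ̂(uᵢ)·uᵢ`. -/
noncomputable def Ghat (d n : ℕ) (g : EuclideanSpace ℝ (Fin d)) (s β : ℝ)
    (ω : Fin n → (sphere (0 : EuclideanSpace ℝ (Fin d)) 1)) :
    EuclideanSpace ℝ (Fin d) :=
  (1 / (n : ℝ)) • ∑ i, phiHat d g s β (ω i) • ((ω i : EuclideanSpace ℝ (Fin d)))

/-!
Reflect in the hyperplane `gᗮ` every sample whose weight is unchanged by that reflection. The law of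
the samples and all the weights are preserved, and so is `‖S‖² - ⟪g, S⟫²` for the weighted sum `S`,
while a numerator `⟪g, S⟫` and its reflected counterpart `⟪g, S'⟫` add up to a nonnegative number.

When the samples are nearly orthogonal to each other and to `g`, which spherical cap bounds make
likely, `‖S‖²` is close to the sum of the squared weights, and Hoeffding's inequality controls the
latter. On that event `⟪g, S⟫ / ‖S‖ + ⟪g, S'⟫ / ‖S'‖` therefore lies between
`(⟪g, S⟫ + ⟪g, S'⟫) / M` and `(⟪g, S⟫ + ⟪g, S'⟫) / m`, where `m` and `M` are the lower and upper
bounds on the norm. A single numerator may be negative, so this comparison would fail without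
pairing. Integrating it gives the theorem, the exceptional event costing at most its probability
times the supremum of the two integrands.
-/

open ProbabilityTheory
open scoped Pointwise

section MeasureTheory

variable {α β : Type*} [MeasurableSpace α] [MeasurableSpace β]

lemma measurePreserving_piecewise {μ : Measure α} {ν : Measure β} {f g : α → β} {s : Set α}
    {t : Set β} [DecidablePred (· ∈ s)] (hf : MeasurePreserving f μ ν)
    (hg : MeasurePreserving g μ ν) (ht : MeasurableSet t) (hfs : f ⁻¹' t = s)
    (hgs : g ⁻¹' t = s) : MeasurePreserving (s.piecewise f g) μ ν := by
  have hs : MeasurableSet s := hfs ▸ hf.measurable ht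
  have hm : Measurable (s.piecewise f g) := hf.measurable.piecewise hs hg.measurable
  refine ⟨hm, Measure.ext fun A (hA : MeasurableSet A) => ?_⟩
  have hf_part : s.piecewise f g ⁻¹' A ∩ s = f ⁻¹' (A ∩ t) := by
    rw [preimage_inter, hfs, piecewise_preimage, ite_inter_self]
  have hg_part : s.piecewise f g ⁻¹' A \ s = g ⁻¹' (A \ t) := by
    rw [preimage_sdiff, hgs, piecewise_preimage, ite_sdiff_self]
  rw [Measure.map_apply hm hA, ← measure_inter_add_sdiff _ hs, hf_part, hg_part,
    hf.measure_preimage (hA.inter ht).nullMeasurableSet,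
    hg.measure_preimage (hA.diff ht).nullMeasurableSet, measure_inter_add_sdiff _ ht]

lemma measurePreserving_eval_prodMk {ι : Type*} [Fintype ι] {X : ι → Type*}
    [∀ i, MeasurableSpace (X i)] (μ : ∀ i, Measure (X i)) [∀ i, IsProbabilityMeasure (μ i)]
    {i j : ι} (hij : i ≠ j) :
    MeasurePreserving (fun ω : ∀ i, X i => (ω i, ω j)) (Measure.pi μ) ((μ i).prod (μ j)) := by
  refine ⟨by fun_prop, ?_⟩
  have hindep : IndepFun (fun ω : ∀ i, X i => ω i) (fun ω => ω j) (Measure.pi μ) :=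
    (iIndepFun_pi (μ := μ) (X := fun _ => id) fun _ => aemeasurable_id).indepFun hij
  rw [(indepFun_iff_map_prod_eq_prod_map_map (measurable_pi_apply i).aemeasurable
      (measurable_pi_apply j).aemeasurable).1 hindep,
    (measurePreserving_eval μ i).map_eq, (measurePreserving_eval μ j).map_eq]

lemma measureReal_prod_le_of_forall_preimage_le {μ : Measure α} {ν : Measure β}
    [IsProbabilityMeasure μ] [IsFiniteMeasure ν] {s : Set (α × β)} (hs : MeasurableSet s) {c : ℝ}
    (hc : ∀ x, ν.real (Prod.mk x ⁻¹' s) ≤ c) : (μ.prod ν).real s ≤ c := by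
  have hc' (x : α) : ν (Prod.mk x ⁻¹' s) ≤ ENNReal.ofReal c :=
    (ENNReal.le_ofReal_iff_toReal_le (measure_ne_top _ _)
      (measureReal_nonneg.trans (hc x))).2 (hc x)
  have hc0 : 0 ≤ c := measureReal_nonneg.trans (hc (Classical.choice μ.nonempty_of_neZero))
  refine ENNReal.toReal_le_of_le_ofReal hc0 ?_
  calc μ.prod ν s = ∫⁻ x, ν (Prod.mk x ⁻¹' s) ∂μ := Measure.prod_apply hs
    _ ≤ ∫⁻ _, ENNReal.ofReal c ∂μ := lintegral_mono hc'
    _ = ENNReal.ofReal c := by simp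

lemma integral_le_mul_measureReal_of_add_comp_nonpos {P : Measure α} [IsFiniteMeasure P]
    {T : α → α} (hT : MeasurePreserving T P P) {F : α → ℝ} (hF : Integrable F P) {M : ℝ}
    (hM : ∀ x, F x ≤ M) {B : Set α} (hB : MeasurableSet B)
    (hoff : ∀ x ∉ B, F x + F (T x) ≤ 0) : ∫ x, F x ∂P ≤ M * P.real B := by
  have hFT : Integrable (fun x => F (T x)) P := hT.integrable_comp_of_integrable hF
  have hcomp : ∫ x, F (T x) ∂P = ∫ x, F x ∂P := by
    rw [← integral_map hT.aemeasurable (by rw [hT.map_eq]; exact hF.aestronglyMeasurable),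
      hT.map_eq]
  have hpointwise : ∀ x, F x + F (T x) ≤ B.indicator (fun _ => M + M) x := fun x => by
    by_cases hx : x ∈ B
    · rw [indicator_of_mem hx]
      exact add_le_add (hM x) (hM (T x))
    · rw [indicator_of_notMem hx]
      exact hoff x hx
  have hdouble : ∫ x, F x ∂P + ∫ x, F x ∂P ≤ P.real B * (M + M) :=
    calc ∫ x, F x ∂P + ∫ x, F x ∂P = ∫ x, (F x + F (T x)) ∂P := by
          rw [integral_add hF hFT, hcomp]
      _ ≤ ∫ x, B.indicator (fun _ => M + M) x ∂P :=
          integral_mono (hF.add hFT) ((integrable_const _).indicator hB) hpointwise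
      _ = P.real B * (M + M) := by rw [integral_indicator_const _ hB, smul_eq_mul]
  linarith

lemma integral_le_integral_div_add_mul_measureReal {P : Measure α} [IsFiniteMeasure P] {T : α → α}
    (hT : MeasurePreserving T P P) {f h : α → ℝ} (hf : Integrable f P) (hh : Integrable h P)
    {l c : ℝ} (hl : 0 ≤ l) (hf1 : ∀ x, |f x| ≤ 1) (hhc : ∀ x, |h x| ≤ c) {B : Set α}
    (hB : MeasurableSet B) (hoff : ∀ x ∉ B, f x + f (T x) ≤ (h x + h (T x)) / l) :
    ∫ x, f x ∂P ≤ (∫ x, h x ∂P) / l + (1 + c / l) * P.real B := by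
  have hdiff := integral_le_mul_measureReal_of_add_comp_nonpos hT (hf.sub (hh.div_const l))
    (M := 1 + c / l) (fun x => ?_) hB fun x hx => ?_
  · simp only [Pi.sub_apply] at hdiff
    rw [integral_sub hf (hh.div_const l), integral_div] at hdiff
    linarith
  · have hhl : -(c / l) ≤ h x / l := by
      rw [← neg_div]
      exact div_le_div_of_nonneg_right (neg_le_of_abs_le (hhc x)) hl
    simp only [Pi.sub_apply]
    linarith [le_of_abs_le (hf1 x)]
  · simp only [Pi.sub_apply]
    linarith [hoff x hx, add_div (h x) (h (T x)) l]

lemma integral_div_sub_mul_measureReal_le_integral {P : Measure α} [IsFiniteMeasure P] {T : α → α}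
    (hT : MeasurePreserving T P P) {f h : α → ℝ} (hf : Integrable f P) (hh : Integrable h P)
    {l c : ℝ} (hl : 0 ≤ l) (hf1 : ∀ x, |f x| ≤ 1) (hhc : ∀ x, |h x| ≤ c) {B : Set α}
    (hB : MeasurableSet B) (hoff : ∀ x ∉ B, (h x + h (T x)) / l ≤ f x + f (T x)) :
    (∫ x, h x ∂P) / l - (1 + c / l) * P.real B ≤ ∫ x, f x ∂P := by
  have hneg := integral_le_integral_div_add_mul_measureReal hT hf.neg hh.neg hl
    (fun x => (abs_neg _).trans_le (hf1 x)) (fun x => (abs_neg _).trans_le (hhc x)) hB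
    fun x hx => by
      simp only [Pi.neg_apply]
      rw [← neg_add, ← neg_add, neg_div]
      exact neg_le_neg (hoff x hx)
  simp only [Pi.neg_apply, integral_neg, neg_div] at hneg
  linarith

lemma measureReal_le_abs_sum_sub_integral_le {μ : Measure α} [IsProbabilityMeasure μ] {ι : Type*}
    [Fintype ι] {f : α → ℝ} (hf : Measurable f) {a b : ℝ} (hab : ∀ x, f x ∈ Icc a b) {t : ℝ}
    (ht : 0 ≤ t) :
    (Measure.pi fun _ : ι => μ).real
        {ω | t ≤ |∑ i, f (ω i) - Fintype.card ι * ∫ x, f x ∂μ|} ≤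
      2 * exp (-2 * t ^ 2 / (Fintype.card ι * (b - a) ^ 2)) := by
  set P := Measure.pi fun _ : ι => μ
  set Y : ι → (ι → α) → ℝ := fun i ω => f (ω i) - ∫ x, f x ∂μ
  have hindep : iIndepFun Y P :=
    iIndepFun_pi (μ := fun _ => μ) (X := fun _ x => f x - ∫ x, f x ∂μ) fun _ => by fun_prop
  have hsubG : ∀ i ∈ Finset.univ, HasSubgaussianMGF (Y i) ((‖b - a‖₊ / 2) ^ 2) P := fun i _ => by
    have hmean : ∫ ω, f (ω i) ∂P = ∫ x, f x ∂μ :=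
      integral_comp_eval (μ := fun _ : ι => μ) hf.aestronglyMeasurable
    simpa only [Y, hmean] using hasSubgaussianMGF_of_mem_Icc (μ := P) (X := fun ω => f (ω i))
      (hf.comp (measurable_pi_apply i)).aemeasurable (ae_of_all _ fun ω => hab (ω i))
  have hsum : HasSubgaussianMGF (fun ω => ∑ i, Y i ω) (∑ _ : ι, (‖b - a‖₊ / 2) ^ 2) P :=
    .sum_of_iIndepFun hindep hsubG
  have hexponent : -t ^ 2 / (2 * ((∑ _ : ι, (‖b - a‖₊ / 2) ^ 2 : NNReal) : ℝ)) =
      -2 * t ^ 2 / (Fintype.card ι * (b - a) ^ 2) := by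
    simp only [Finset.sum_const, Finset.card_univ, nsmul_eq_mul]
    push_cast
    rw [div_pow, norm_eq_abs, sq_abs]
    field_simp
  have htails : {ω | t ≤ |∑ i, f (ω i) - Fintype.card ι * ∫ x, f x ∂μ|} ⊆
      {ω | t ≤ ∑ i, Y i ω} ∪ {ω | t ≤ -∑ i, Y i ω} := fun ω hω => by
    simpa only [Y, Finset.sum_sub_distrib, Finset.sum_const, Finset.card_univ, nsmul_eq_mul,
      mem_union, mem_ofPred_eq, le_abs] using hω
  calc P.real {ω | t ≤ |∑ i, f (ω i) - Fintype.card ι * ∫ x, f x ∂μ|}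
      ≤ P.real {ω | t ≤ ∑ i, Y i ω} + P.real {ω | t ≤ -∑ i, Y i ω} :=
        (measureReal_mono htails).trans (measureReal_union_le _ _)
    _ ≤ _ := by
        rw [two_mul, ← hexponent]
        exact add_le_add (hsum.measure_ge_le ht) (hsum.neg.measure_ge_le ht)

end MeasureTheory

section RealInequalities

lemma div_add_div_le_add_div {x y p q l : ℝ} (hl : 0 < l) (hp : l ≤ p) (hq : l ≤ q)
    (hpq : p ^ 2 - x ^ 2 = q ^ 2 - y ^ 2) (hxy : 0 ≤ x + y) :
    x / p + y / q ≤ (x + y) / l := by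
  wlog hyx : y ≤ x generalizing x y p q
  · rw [add_comm (x / p), add_comm x]
    exact this hq hp hpq.symm (by linarith) (le_of_not_ge hyx)
  have hx : 0 ≤ x := by linarith
  have hq0 : 0 < q := hl.trans_le hq
  have hqp : q ≤ p := le_of_sq_le_sq (by nlinarith) (hl.trans_le hp).le
  calc x / p + y / q ≤ x / q + y / q := by gcongr
    _ = (x + y) / q := (add_div x y q).symm
    _ ≤ (x + y) / l := by gcongr

/-- The function `x ↦ x / √(c + x²)` is concave on `[0, ∞)`; the left-hand side is its slope at
the right endpoint. -/
lemma sub_mul_div_cube_le_div_sub_div {x y p q : ℝ} (hy : 0 ≤ y) (hyx : y ≤ x) (hxp : x ≤ p)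
    (hp : 0 < p) (hq : 0 < q) (hpq : p ^ 2 - x ^ 2 = q ^ 2 - y ^ 2) :
    (x - y) * ((p ^ 2 - x ^ 2) / p ^ 3) ≤ x / p - y / q := by
  rcases (hy.trans hyx).eq_or_lt with rfl | hx
  · simp [le_antisymm hyx hy]
  have hqp : q ≤ p := le_of_sq_le_sq (by nlinarith) hp.le
  have hc : 0 ≤ p ^ 2 - x ^ 2 := by nlinarith
  have hnum : 0 ≤ (x - y) * (p ^ 2 - x ^ 2) * (x + y) :=
    mul_nonneg (mul_nonneg (sub_nonneg.2 hyx) hc) (add_nonneg hx.le hy)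
  have hdenom : p * q * (x * q + y * p) ≤ p ^ 3 * (x + y) :=
    calc p * q * (x * q + y * p) ≤ p * p * (x * p + y * p) := by gcongr
      _ = p ^ 3 * (x + y) := by ring
  have hdiff : x / p - y / q =
      (x - y) * (p ^ 2 - x ^ 2) * (x + y) / (p * q * (x * q + y * p)) := by
    rw [div_sub_div _ _ hp.ne' hq.ne', div_eq_div_iff (by positivity) (by positivity)]
    linear_combination (-p * q * x ^ 2) * hpq
  calc (x - y) * ((p ^ 2 - x ^ 2) / p ^ 3)
      = (x - y) * (p ^ 2 - x ^ 2) * (x + y) / (p ^ 3 * (x + y)) := by field_simp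
    _ ≤ (x - y) * (p ^ 2 - x ^ 2) * (x + y) / (p * q * (x * q + y * p)) :=
        div_le_div_of_nonneg_left hnum (by positivity) hdenom
    _ = x / p - y / q := hdiff.symm

lemma one_div_le_sub_sq_div_cube {x p m : ℝ} (hp : 0 < p) (hm : 0 < m)
    (hpm : p ^ 2 + 6 * x ^ 2 ≤ m ^ 2) (hxp : 2 * x ^ 2 ≤ p ^ 2) :
    1 / m ≤ (p ^ 2 - x ^ 2) / p ^ 3 := by
  have hc : 0 ≤ p ^ 2 - x ^ 2 := by nlinarith
  rw [div_le_div_iff₀ hm (by positivity), one_mul]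
  refine le_of_sq_le_sq ?_ (by positivity)
  have hgap : 0 ≤ x ^ 2 * ((p ^ 2 - 2 * x ^ 2) * (4 * p ^ 2 - 3 * x ^ 2)) :=
    mul_nonneg (sq_nonneg x) (mul_nonneg (by linarith) (by nlinarith))
  calc (p ^ 3) ^ 2 ≤ (p ^ 2 - x ^ 2) ^ 2 * (p ^ 2 + 6 * x ^ 2) := by linarith
    _ ≤ (p ^ 2 - x ^ 2) ^ 2 * m ^ 2 := by gcongr
    _ = ((p ^ 2 - x ^ 2) * m) ^ 2 := by ring

lemma add_div_le_div_add_div {x y p q m : ℝ} (hm : 0 < m) (hp : 0 < p) (hq : 0 < q)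
    (hpq : p ^ 2 - x ^ 2 = q ^ 2 - y ^ 2) (hxy : 0 ≤ x + y) (hpm : p ^ 2 + 6 * x ^ 2 ≤ m ^ 2)
    (hqm : q ^ 2 + 6 * y ^ 2 ≤ m ^ 2) (hxp : 2 * x ^ 2 ≤ p ^ 2) (hyq : 2 * y ^ 2 ≤ q ^ 2) :
    (x + y) / m ≤ x / p + y / q := by
  wlog hyx : y ≤ x generalizing x y p q
  · rw [add_comm (x / p), add_comm x]
    exact this hq hp hpq.symm (by linarith) hqm hpm hyq hxp (le_of_not_ge hyx)
  have hx : 0 ≤ x := by linarith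
  rcases le_total 0 y with hy | hy
  · have hpm' : p ≤ m := le_of_sq_le_sq (by nlinarith) hm.le
    have hqm' : q ≤ m := le_of_sq_le_sq (by nlinarith) hm.le
    rw [add_div]
    gcongr
  · have hxp' : x ≤ p := le_of_sq_le_sq (by nlinarith) hp.le
    have hslope := sub_mul_div_cube_le_div_sub_div (neg_nonneg.2 hy) (neg_le_iff_add_nonneg.2 hxy)
      hxp' hp hq (by rwa [neg_sq])
    calc (x + y) / m = (x - -y) * (1 / m) := by ring
      _ ≤ (x - -y) * ((p ^ 2 - x ^ 2) / p ^ 3) :=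
          mul_le_mul_of_nonneg_left (one_div_le_sub_sq_div_cube hp hm hpm hxp) (by linarith)
      _ ≤ x / p - -y / q := hslope
      _ = x / p + y / q := by ring

lemma mul_div_sqrt_mul {x : ℝ} (hx : 0 ≤ x) (a y : ℝ) : x * a / √(x * y) = √x * a / √y := by
  rw [sqrt_mul hx, mul_div_mul_comm, div_sqrt, mul_div_assoc]

lemma sum_fin_val_mul_two (n : ℕ) : (∑ j : Fin n, (j : ℝ)) * 2 = n * (n - 1) := by
  induction n with
  | zero => simp
  | succ n ih =>
    rw [Fin.sum_univ_castSucc, add_mul, Nat.cast_succ]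
    simp only [Fin.val_castSucc, Fin.val_last, ih]
    ring

end RealInequalities

section InnerProduct

variable {E : Type*} [NormedAddCommGroup E] [InnerProductSpace ℝ E]

lemma abs_norm_sq_sum_smul_sub_le {ι : Type*} [Fintype ι] {u : ι → E} {a : ι → ℝ} {β η : ℝ}
    (hu : ∀ i, ‖u i‖ = 1) (ha : ∀ i, |a i| ≤ β) (hη : ∀ i j, i ≠ j → |⟪u i, u j⟫| ≤ η) :
    |‖∑ i, a i • u i‖ ^ 2 - ∑ i, a i ^ 2| ≤
      Fintype.card ι * (Fintype.card ι - 1) * (β ^ 2 * η) := by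
  classical
  have hoff (i j : ι) (hij : j ∈ Finset.univ.erase i) :
      |a j * a i * ⟪u i, u j⟫| ≤ β ^ 2 * η := by
    have hβ : 0 ≤ β := (abs_nonneg _).trans (ha i)
    rw [abs_mul, abs_mul, sq]
    gcongr
    exacts [ha j, ha i, hη i j (Finset.ne_of_mem_erase hij).symm]
  have hexpand : ‖∑ i, a i • u i‖ ^ 2 - ∑ i, a i ^ 2 =
      ∑ i, ∑ j ∈ Finset.univ.erase i, a j * a i * ⟪u i, u j⟫ := by
    have hrow (i : ι) : ∑ j, a j * a i * ⟪u i, u j⟫ =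
        a i ^ 2 + ∑ j ∈ Finset.univ.erase i, a j * a i * ⟪u i, u j⟫ := by
      rw [← Finset.add_sum_erase _ _ (Finset.mem_univ i), real_inner_self_eq_norm_sq, hu i]
      ring
    rw [← real_inner_self_eq_norm_sq, sum_inner]
    simp only [inner_sum, real_inner_smul_left, real_inner_smul_right, ← mul_assoc, hrow,
      Finset.sum_add_distrib, add_sub_cancel_left]
  rw [hexpand]
  calc |∑ i, ∑ j ∈ Finset.univ.erase i, a j * a i * ⟪u i, u j⟫|
      ≤ ∑ i, ∑ j ∈ Finset.univ.erase i, |a j * a i * ⟪u i, u j⟫| :=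
        (Finset.abs_sum_le_sum_abs _ _).trans
          (Finset.sum_le_sum fun _ _ => Finset.abs_sum_le_sum_abs _ _)
    _ ≤ ∑ i, ∑ _j ∈ Finset.univ.erase i, β ^ 2 * η :=
        Finset.sum_le_sum fun i _ => Finset.sum_le_sum (hoff i)
    _ = Fintype.card ι * (Fintype.card ι - 1) * (β ^ 2 * η) := by
        rcases isEmpty_or_nonempty ι with hι | hι
        · simp
        · simp only [Finset.sum_const, Finset.card_univ, nsmul_eq_mul,
            Finset.card_erase_of_mem (Finset.mem_univ _), Nat.cast_pred Fintype.card_pos,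
            mul_assoc]

lemma norm_sq_sub_inner_sq_add_smul {g : E} (hg : ‖g‖ = 1) (v : E) (c : ℝ) :
    ‖v + c • g‖ ^ 2 - ⟪g, v + c • g⟫ ^ 2 = ‖v‖ ^ 2 - ⟪g, v⟫ ^ 2 := by
  rw [norm_add_sq_real, inner_add_right, real_inner_smul_right, real_inner_smul_right, norm_smul,
    real_inner_self_eq_norm_sq, hg, real_inner_comm v g, mul_one, norm_eq_abs, sq_abs]
  ring

lemma smul_mem_closedBall_of_le_inner {v x : E} (hv : ‖v‖ = 1) (hx : ‖x‖ = 1) {t r : ℝ}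
    (ht0 : 0 ≤ t) (ht : t ≤ ⟪v, x⟫) (hr : r ∈ Ioo (0 : ℝ) 1) :
    r • x ∈ closedBall ((t / 2) • v) (exp (-(3 / 8 * t ^ 2))) := by
  have ht1 : t ≤ 1 := ht.trans ((real_inner_le_norm v x).trans (by rw [hv, hx, mul_one]))
  have hinner : r * (t / 2 * t) ≤ r * (t / 2 * ⟪v, x⟫) := by
    have := hr.1.le
    gcongr
  rw [mem_closedBall, dist_eq_norm]
  refine le_of_sq_le_sq ?_ (exp_pos _).le
  calc ‖r • x - (t / 2) • v‖ ^ 2 = r ^ 2 - 2 * (r * (t / 2 * ⟪v, x⟫)) + (t / 2) ^ 2 := by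
        rw [norm_sub_sq_real, norm_smul, norm_smul, hv, hx, real_inner_smul_left,
          real_inner_smul_right, real_inner_comm, norm_eq_abs, norm_eq_abs, mul_one, mul_one,
          sq_abs, sq_abs]
    _ ≤ 2 * -(3 / 8 * t ^ 2) + 1 := by
        nlinarith [mul_nonneg (sub_nonneg.2 hr.2.le)
          (mul_nonneg (sub_nonneg.2 ht1) (by linarith : 0 ≤ 1 + t)), mul_pos hr.1 (sub_pos.2 hr.2)]
    _ ≤ exp (2 * -(3 / 8 * t ^ 2)) := add_one_le_exp _
    _ = exp (-(3 / 8 * t ^ 2)) ^ 2 := by rw [← exp_nat_mul, Nat.cast_ofNat]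

end InnerProduct

section SphereMap

variable {E : Type*} [NormedAddCommGroup E] [NormedSpace ℝ E]

/-- The action of a linear isometry on the unit sphere. -/
def sphereMap (e : E ≃ₗᵢ[ℝ] E) (u : sphere (0 : E) 1) : sphere (0 : E) 1 :=
  ⟨e u, by simp⟩

lemma preimage_Ioo_smul_coe_image (e : E ≃ₗᵢ[ℝ] E) (s : Set (sphere (0 : E) 1)) :
    e ⁻¹' (Ioo (0 : ℝ) 1 • ((↑) '' s : Set E)) =
      Ioo (0 : ℝ) 1 • ((↑) '' (sphereMap e ⁻¹' s) : Set E) := by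
  ext x
  constructor
  · rintro ⟨r, hr, _, ⟨u, hu, rfl⟩, hx⟩
    refine ⟨r, hr, _, ⟨sphereMap e.symm u, ?_, rfl⟩, e.injective ?_⟩
    · simpa [sphereMap] using hu
    · simpa [sphereMap] using hx
  · rintro ⟨r, hr, _, ⟨u, hu, rfl⟩, rfl⟩
    exact ⟨r, hr, _, ⟨_, hu, rfl⟩, by simp [sphereMap]⟩

end SphereMap

section SphereMeasure

variable {E : Type*} [NormedAddCommGroup E] [InnerProductSpace ℝ E] [FiniteDimensional ℝ E]
  [MeasurableSpace E] [BorelSpace E]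

variable (E) in
/-- The normalized surface measure on the unit sphere of a Euclidean space; it is a probability
measure unless `E` is trivial, in which case it is zero. -/
noncomputable def uniformSphere : Measure (sphere (0 : E) 1) :=
  ((volume : Measure E).toSphere univ)⁻¹ • (volume : Measure E).toSphere

instance [Nontrivial E] : IsProbabilityMeasure (uniformSphere E) :=
  have : NeZero (volume : Measure E).toSphere :=
    ⟨(Measure.toSphere_eq_zero_iff _).not.2 (not_subsingleton E)⟩
  isProbabilityMeasureSMul

lemma uniformSphere_apply [Nontrivial E] {s : Set (sphere (0 : E) 1)} (hs : MeasurableSet s) :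
    uniformSphere E s = volume (Ioo (0 : ℝ) 1 • ((↑) '' s : Set E)) / volume (ball (0 : E) 1) := by
  rw [uniformSphere, Measure.smul_apply, smul_eq_mul, Measure.toSphere_apply_univ,
    Measure.toSphere_apply' _ hs, mul_comm, ← div_eq_mul_inv]
  exact ENNReal.mul_div_mul_left _ _ (by simp [Module.finrank_pos.ne']) (by simp)

lemma measurableSet_le_inner (v : E) (t : ℝ) :
    MeasurableSet {u : sphere (0 : E) 1 | t ≤ ⟪v, u⟫} :=
  measurableSet_le measurable_const (by fun_prop)

lemma uniformSphere_le_inner_le [Nontrivial E] {v : E} (hv : ‖v‖ = 1) {t : ℝ} (ht : 0 ≤ t) :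
    (uniformSphere E).real {u | t ≤ ⟪v, u⟫} ≤ exp (-(3 / 8 * Module.finrank ℝ E * t ^ 2)) := by
  have hcone : Ioo (0 : ℝ) 1 • ((↑) '' {u : sphere (0 : E) 1 | t ≤ ⟪v, u⟫} : Set E) ⊆
      closedBall ((t / 2) • v) (exp (-(3 / 8 * t ^ 2))) := by
    rintro _ ⟨r, hr, _, ⟨u, hu, rfl⟩, rfl⟩
    exact smul_mem_closedBall_of_le_inner hv (norm_eq_of_mem_sphere u) ht hu hr
  refine ENNReal.toReal_le_of_le_ofReal (exp_pos _).le ?_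
  rw [uniformSphere_apply (measurableSet_le_inner v t)]
  refine ENNReal.div_le_of_le_mul ((measure_mono hcone).trans_eq ?_)
  rw [Measure.addHaar_closedBall _ _ (exp_pos _).le, ← exp_nat_mul]
  ring_nf

lemma uniformSphere_le_abs_inner_le [Nontrivial E] {v : E} (hv : ‖v‖ = 1) {t : ℝ} (ht : 0 ≤ t) :
    (uniformSphere E).real {u | t ≤ |⟪v, u⟫|} ≤
      2 * exp (-(3 / 8 * Module.finrank ℝ E * t ^ 2)) := by
  have hcaps : {u : sphere (0 : E) 1 | t ≤ |⟪v, u⟫|} ⊆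
      {u | t ≤ ⟪v, u⟫} ∪ {u | t ≤ ⟪-v, u⟫} := fun u hu => by
    simpa only [mem_union, mem_ofPred_eq, inner_neg_left, le_abs] using hu
  rw [two_mul]
  exact (measureReal_mono hcaps).trans ((measureReal_union_le _ _).trans (add_le_add
    (uniformSphere_le_inner_le hv ht) (uniformSphere_le_inner_le ((norm_neg v).trans hv) ht)))

lemma measurePreserving_sphereMap (e : E ≃ₗᵢ[ℝ] E) :
    MeasurePreserving (sphereMap e) (uniformSphere E) (uniformSphere E) := by
  have hm : Measurable (sphereMap e) :=
    (e.continuous.measurable.comp measurable_subtype_coe).subtype_mk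
  refine ⟨hm, Measure.ext fun s hs => ?_⟩
  rw [Measure.map_apply hm hs, uniformSphere, Measure.smul_apply, Measure.smul_apply,
    Measure.toSphere_apply' _ hs, Measure.toSphere_apply' _ (hm hs),
    ← preimage_Ioo_smul_coe_image,
    e.measurePreserving.measure_preimage_emb e.toHomeomorph.measurableEmbedding]

end SphereMeasure

section WeightReflection

variable {E : Type*} [NormedAddCommGroup E] [InnerProductSpace ℝ E] {g : E} {w : ℝ → ℝ}

lemma inner_reflection_orthogonal_singleton (g v : E) :
    ⟪g, (ℝ ∙ g)ᗮ.reflection v⟫ = -⟪g, v⟫ := by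
  rw [← (ℝ ∙ g)ᗮ.reflection.inner_map_map, Submodule.reflection_reflection,
    Submodule.reflection_orthogonalComplement_singleton_eq_neg, inner_neg_left]

lemma reflection_orthogonal_singleton_of_norm_eq_one (hg : ‖g‖ = 1) (v : E) :
    (ℝ ∙ g)ᗮ.reflection v = v + (-⟪g, v⟫ - ⟪g, v⟫) • g := by
  rw [Submodule.reflection_orthogonal_apply, Submodule.reflection_singleton_apply, hg]
  simp only [RCLike.ofReal_real_eq_id, id_eq, one_pow, div_one]
  module

open Classical in
/-- The symmetry of the sphere that reflects `u` in the hyperplane `gᗮ` whenever this leaves the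
weight `w ⟪g, u⟫` unchanged, and fixes `u` otherwise. -/
noncomputable def weightReflection (w : ℝ → ℝ) (g : E) : sphere (0 : E) 1 → sphere (0 : E) 1 :=
  {u : sphere (0 : E) 1 | w (-⟪g, u⟫) = w ⟪g, u⟫}.piecewise
    (sphereMap (ℝ ∙ g)ᗮ.reflection) id

lemma weightReflection_of_eq {u : sphere (0 : E) 1} (hu : w (-⟪g, u⟫) = w ⟪g, u⟫) :
    weightReflection w g u = sphereMap (ℝ ∙ g)ᗮ.reflection u :=
  if_pos hu

lemma weightReflection_of_ne {u : sphere (0 : E) 1} (hu : w (-⟪g, u⟫) ≠ w ⟪g, u⟫) :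
    weightReflection w g u = u :=
  if_neg hu

lemma inner_weightReflection_of_eq {u : sphere (0 : E) 1} (hu : w (-⟪g, u⟫) = w ⟪g, u⟫) :
    ⟪g, (weightReflection w g u : E)⟫ = -⟪g, u⟫ := by
  rw [weightReflection_of_eq hu]
  exact inner_reflection_orthogonal_singleton g u

lemma weight_inner_weightReflection (u : sphere (0 : E) 1) :
    w ⟪g, (weightReflection w g u : E)⟫ = w ⟪g, u⟫ := by
  by_cases hu : w (-⟪g, u⟫) = w ⟪g, u⟫
  · rw [inner_weightReflection_of_eq hu, hu]
  · rw [weightReflection_of_ne hu]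

lemma abs_inner_weightReflection (u : sphere (0 : E) 1) :
    |⟪g, (weightReflection w g u : E)⟫| = |⟪g, u⟫| := by
  by_cases hu : w (-⟪g, u⟫) = w ⟪g, u⟫
  · rw [inner_weightReflection_of_eq hu, abs_neg]
  · rw [weightReflection_of_ne hu]

lemma weight_mul_inner_add_inner_weightReflection_nonneg
    (hw : ∀ x, w (-x) = w x ∨ 0 ≤ x * w x) (u : sphere (0 : E) 1) :
    0 ≤ w ⟪g, u⟫ * (⟪g, u⟫ + ⟪g, (weightReflection w g u : E)⟫) := by
  by_cases hu : w (-⟪g, u⟫) = w ⟪g, u⟫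
  · rw [inner_weightReflection_of_eq hu, add_neg_cancel, mul_zero]
  · rw [weightReflection_of_ne hu]
    linarith [(hw ⟪g, u⟫).resolve_left hu]

lemma coe_weightReflection (hg : ‖g‖ = 1) (u : sphere (0 : E) 1) :
    (weightReflection w g u : E) = u + (⟪g, (weightReflection w g u : E)⟫ - ⟪g, u⟫) • g := by
  by_cases hu : w (-⟪g, u⟫) = w ⟪g, u⟫
  · rw [inner_weightReflection_of_eq hu, weightReflection_of_eq hu]
    exact reflection_orthogonal_singleton_of_norm_eq_one hg u
  · rw [weightReflection_of_ne hu, sub_self, zero_smul, add_zero]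

lemma abs_inner_weightReflection_weightReflection_le (hg : ‖g‖ = 1) (u v : sphere (0 : E) 1) :
    |⟪(weightReflection w g u : E), weightReflection w g v⟫| ≤
      |⟪(u : E), v⟫| + 2 * (|⟪g, u⟫| * |⟪g, v⟫|) := by
  set x := ⟪g, (weightReflection w g u : E)⟫ with hx
  set y := ⟪g, (weightReflection w g v : E)⟫ with hy
  have hinner : ⟪(weightReflection w g u : E), weightReflection w g v⟫ =
      ⟪(u : E), v⟫ - ⟪g, u⟫ * ⟪g, v⟫ + x * y := by
    rw [coe_weightReflection hg u, coe_weightReflection hg v, ← hx, ← hy]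
    simp only [inner_add_left, inner_add_right, real_inner_smul_left, real_inner_smul_right,
      real_inner_self_eq_norm_sq, hg, real_inner_comm g (u : E)]
    ring
  calc |⟪(weightReflection w g u : E), weightReflection w g v⟫|
      ≤ |⟪(u : E), v⟫| + |⟪g, u⟫ * ⟪g, v⟫| + |x * y| := by
        rw [hinner]
        exact (abs_add_le _ _).trans (add_le_add_left (abs_sub _ _) _)
    _ = |⟪(u : E), v⟫| + 2 * (|⟪g, u⟫| * |⟪g, v⟫|) := by
        rw [abs_mul, abs_mul, hx, hy, abs_inner_weightReflection, abs_inner_weightReflection]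
        ring

lemma measurePreserving_weightReflection [FiniteDimensional ℝ E] [MeasurableSpace E]
    [BorelSpace E] (hw : Measurable w) (g : E) :
    MeasurePreserving (weightReflection w g) (uniformSphere E) (uniformSphere E) := by
  have hmeas : MeasurableSet {u : sphere (0 : E) 1 | w (-⟪g, u⟫) = w ⟪g, u⟫} :=
    measurableSet_eq_fun (by fun_prop) (by fun_prop)
  refine measurePreserving_piecewise (measurePreserving_sphereMap _) (.id _) hmeas ?_ rfl
  ext u
  have hinner : ⟪g, (sphereMap (ℝ ∙ g)ᗮ.reflection u : E)⟫ = -⟪g, u⟫ :=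
    inner_reflection_orthogonal_singleton g u
  simp only [mem_preimage, mem_ofPred_eq, hinner, neg_neg, eq_comm]

end WeightReflection

section WeightedSum

variable {E : Type*} [NormedAddCommGroup E] [InnerProductSpace ℝ E] {ι : Type*} [Fintype ι]
  {g : E} {w : ℝ → ℝ} {β : ℝ}

/-- The sum of sample directions `ω i`, weighted by a function of their components along `g`; the
AGREST estimator is a positive multiple of it. -/
def weightedSum (w : ℝ → ℝ) (g : E) (ω : ι → sphere (0 : E) 1) : E :=
  ∑ i, w ⟪g, ω i⟫ • (ω i : E)

/-- The cosine of the angle between a unit vector `g` and `weightedSum w g ω`, or `0` if that sum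
vanishes. -/
noncomputable def weightedCosine (w : ℝ → ℝ) (g : E) (ω : ι → sphere (0 : E) 1) : ℝ :=
  ⟪g, weightedSum w g ω⟫ / ‖weightedSum w g ω‖

lemma inner_weightedSum (ω : ι → sphere (0 : E) 1) :
    ⟪g, weightedSum w g ω⟫ = ∑ i, w ⟪g, ω i⟫ * ⟪g, ω i⟫ := by
  simp only [weightedSum, inner_sum, real_inner_smul_right]

lemma abs_inner_weightedSum_le (hw : ∀ x, |w x| ≤ β) {t : ℝ} {ω : ι → sphere (0 : E) 1}
    (hω : ∀ i, |⟪g, ω i⟫| ≤ t) : |⟪g, weightedSum w g ω⟫| ≤ Fintype.card ι * (β * t) := by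
  have hterm (i : ι) : |w ⟪g, ω i⟫ * ⟪g, ω i⟫| ≤ β * t := by
    have hβ : 0 ≤ β := (abs_nonneg _).trans (hw 0)
    rw [abs_mul]
    gcongr
    exacts [hw _, hω i]
  calc |⟪g, weightedSum w g ω⟫| ≤ ∑ i, |w ⟪g, ω i⟫ * ⟪g, ω i⟫| := by
        rw [inner_weightedSum]
        exact Finset.abs_sum_le_sum_abs _ _
    _ ≤ ∑ _i : ι, β * t := Finset.sum_le_sum fun i _ => hterm i
    _ = Fintype.card ι * (β * t) := by
        rw [Finset.sum_const, Finset.card_univ, nsmul_eq_mul]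

lemma abs_inner_weightedSum_le_card_mul (hg : ‖g‖ = 1) (hw : ∀ x, |w x| ≤ β)
    (ω : ι → sphere (0 : E) 1) : |⟪g, weightedSum w g ω⟫| ≤ Fintype.card ι * β := by
  have hinner (i : ι) : |⟪g, (ω i : E)⟫| ≤ 1 := by
    simpa only [hg, norm_eq_of_mem_sphere, mul_one] using abs_real_inner_le_norm g (ω i : E)
  simpa only [mul_one] using abs_inner_weightedSum_le hw hinner

lemma abs_weightedCosine_le_one (hg : ‖g‖ = 1) (ω : ι → sphere (0 : E) 1) :
    |weightedCosine w g ω| ≤ 1 := by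
  simpa only [weightedCosine, hg, one_mul] using
    abs_real_inner_div_norm_mul_norm_le_one g (weightedSum w g ω)

/-- The reflection `weightReflection` applied to every entry of a tuple. -/
noncomputable def tupleReflection (w : ℝ → ℝ) (g : E) (ω : ι → sphere (0 : E) 1) :
    ι → sphere (0 : E) 1 :=
  fun i => weightReflection w g (ω i)

lemma weightedSum_tupleReflection (hg : ‖g‖ = 1) (ω : ι → sphere (0 : E) 1) :
    weightedSum w g (tupleReflection w g ω) = weightedSum w g ω +
      (∑ i, w ⟪g, ω i⟫ * (⟪g, (weightReflection w g (ω i) : E)⟫ - ⟪g, ω i⟫)) • g := by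
  rw [weightedSum, weightedSum, Finset.sum_smul, ← Finset.sum_add_distrib]
  refine Finset.sum_congr rfl fun i _ => ?_
  rw [tupleReflection, weight_inner_weightReflection (w := w), mul_smul, ← smul_add,
    ← coe_weightReflection hg]

lemma norm_sq_sub_inner_sq_weightedSum_tupleReflection (hg : ‖g‖ = 1)
    (ω : ι → sphere (0 : E) 1) :
    ‖weightedSum w g (tupleReflection w g ω)‖ ^ 2 -
        ⟪g, weightedSum w g (tupleReflection w g ω)⟫ ^ 2 =
      ‖weightedSum w g ω‖ ^ 2 - ⟪g, weightedSum w g ω⟫ ^ 2 := by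
  rw [weightedSum_tupleReflection hg, norm_sq_sub_inner_sq_add_smul hg]

lemma inner_weightedSum_add_inner_weightedSum_tupleReflection_nonneg
    (hw : ∀ x, w (-x) = w x ∨ 0 ≤ x * w x) (ω : ι → sphere (0 : E) 1) :
    0 ≤ ⟪g, weightedSum w g ω⟫ + ⟪g, weightedSum w g (tupleReflection w g ω)⟫ := by
  rw [inner_weightedSum, inner_weightedSum, ← Finset.sum_add_distrib]
  refine Finset.sum_nonneg fun i _ => ?_
  rw [tupleReflection, weight_inner_weightReflection (w := w), ← mul_add]
  exact weight_mul_inner_add_inner_weightReflection_nonneg hw (ω i)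

end WeightedSum

section GoodEvent

variable {E : Type*} [NormedAddCommGroup E] [InnerProductSpace ℝ E] {ι : Type*}

/-- The tuples of unit vectors whose mutual inner products, and whose inner products with `g`, are
all smaller than `t` in absolute value. -/
def incoherentTuples (ι : Type*) (g : E) (t : ℝ) : Set (ι → sphere (0 : E) 1) :=
  {ω | (∀ i, |⟪g, ω i⟫| < t) ∧ ∀ i j, i ≠ j → |⟪(ω i : E), ω j⟫| < t}

lemma compl_incoherentTuples_subset {n : ℕ} (g : E) (t : ℝ) :
    (incoherentTuples (Fin n) g t)ᶜ ⊆
      ⋃ j, {ω | t ≤ |⟪g, ω j⟫|} ∪ ⋃ i ∈ Finset.Iio j, {ω | t ≤ |⟪(ω i : E), ω j⟫|} := by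
  intro ω hω
  contrapose! hω
  simp only [mem_iUnion, mem_union, mem_ofPred_eq, Finset.mem_Iio, not_exists, not_or,
    not_le] at hω
  refine not_notMem.2 ⟨fun j => (hω j).1, fun i j hij => ?_⟩
  rcases hij.lt_or_gt with hlt | hgt
  · exact (hω j).2 i hlt
  · rw [real_inner_comm]
    exact (hω i).2 j hgt

variable {g : E} {w : ℝ → ℝ} {β ε δ V : ℝ} {ω : ι → sphere (0 : E) 1}

lemma abs_inner_weightReflection_le_of_mem_incoherentTuples (hg : ‖g‖ = 1) (hε : ε ≤ 1)
    (hω : ω ∈ incoherentTuples ι g (ε / 5)) {i j : ι} (hij : i ≠ j) :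
    |⟪(weightReflection w g (ω i) : E), weightReflection w g (ω j)⟫| ≤ ε / 2 := by
  have hprod : |⟪g, ω i⟫| * |⟪g, ω j⟫| ≤ ε / 5 * (ε / 5) :=
    mul_le_mul (hω.1 i).le (hω.1 j).le (abs_nonneg _) ((abs_nonneg _).trans (hω.1 i).le)
  have hε₀ : 0 ≤ ε := by linarith [(abs_nonneg _).trans (hω.1 i).le]
  have hpair := abs_inner_weightReflection_weightReflection_le (w := w) hg (ω i) (ω j)
  nlinarith [hω.2 i j hij]

variable [Fintype ι]

lemma norm_sq_weightedSum_bounds (hι : 2 ≤ Fintype.card ι) (hw : ∀ x, |w x| ≤ β) (hε₀ : 0 ≤ ε)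
    (hε₁ : ε ≤ 1) (hg : ∀ i, |⟪g, ω i⟫| ≤ ε / 5)
    (hpair : ∀ i j, i ≠ j → |⟪(ω i : E), ω j⟫| ≤ ε / 2)
    (hV : |∑ i, w ⟪g, ω i⟫ ^ 2 - Fintype.card ι * V| ≤ Fintype.card ι * δ)
    (hL : 0 ≤ V - δ - (Fintype.card ι - 1) * β ^ 2 * ε) :
    Fintype.card ι * (V - δ - (Fintype.card ι - 1) * β ^ 2 * ε) ≤ ‖weightedSum w g ω‖ ^ 2 ∧
      ‖weightedSum w g ω‖ ^ 2 + 6 * ⟪g, weightedSum w g ω⟫ ^ 2 ≤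
        Fintype.card ι * (V + δ + (Fintype.card ι - 1) * β ^ 2 * ε) ∧
      2 * ⟪g, weightedSum w g ω⟫ ^ 2 ≤ ‖weightedSum w g ω‖ ^ 2 := by
  have hdev := abs_le.1 <| abs_norm_sq_sum_smul_sub_le (u := fun i => (ω i : E))
    (a := fun i => w ⟪g, ω i⟫) (fun i => norm_eq_of_mem_sphere (ω i)) (fun _ => hw _) hpair
  rw [← weightedSum] at hdev
  have hinner := abs_inner_weightedSum_le hw hg
  rw [abs_le] at hV
  set n : ℝ := (Fintype.card ι : ℝ)
  set q := ∑ i, w ⟪g, ω i⟫ ^ 2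
  set r := ‖weightedSum w g ω‖
  set x := ⟪g, weightedSum w g ω⟫
  have hn : 2 ≤ n := Nat.ofNat_le_cast.2 hι
  have hx : 6 * x ^ 2 ≤ n * (n - 1) * (β ^ 2 * (ε / 2)) :=
    calc 6 * x ^ 2 ≤ 6 * (n * (β * (ε / 5))) ^ 2 := by
          gcongr 6 * ?_
          exact sq_le_sq' (abs_le.1 hinner).1 (abs_le.1 hinner).2
      _ = 6 / 25 * n * β ^ 2 * ε * (n * ε) := by ring
      _ ≤ 6 / 25 * n * β ^ 2 * ε * (2 * (n - 1)) :=
          mul_le_mul_of_nonneg_left (by nlinarith) (by positivity)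
      _ ≤ n * (n - 1) * (β ^ 2 * (ε / 2)) := by
          have : 0 ≤ n * (n - 1) * (β ^ 2 * ε) :=
            mul_nonneg (mul_nonneg (by linarith) (by linarith)) (by positivity)
          linarith
  have hnL := mul_nonneg (zero_le_two.trans hn) hL
  exact ⟨by linarith [sq_nonneg x], by linarith, by linarith [sq_nonneg x]⟩

lemma lt_one_of_variance_margin_pos (hι : 2 ≤ Fintype.card ι) (hw : ∀ x, |w x| ≤ β)
    (hV : |∑ i, w ⟪g, ω i⟫ ^ 2 - Fintype.card ι * V| ≤ Fintype.card ι * δ)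
    (hε : 0 ≤ ε) (hL : 0 < V - δ - (Fintype.card ι - 1) * β ^ 2 * ε) : ε < 1 := by
  have hsum : ∑ i, w ⟪g, ω i⟫ ^ 2 ≤ Fintype.card ι * β ^ 2 :=
    (Finset.sum_le_card_nsmul _ _ _ fun i _ => sq_le_sq.2 ((hw _).trans (le_abs_self β))).trans_eq
      (nsmul_eq_mul _ _)
  rw [abs_le] at hV
  set n : ℝ := (Fintype.card ι : ℝ)
  have hn : 2 ≤ n := Nat.ofNat_le_cast.2 hι
  have hVβ : V - δ ≤ β ^ 2 :=
    le_of_mul_le_mul_left (by linarith) (two_pos.trans_le hn)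
  nlinarith [mul_nonneg (mul_nonneg (by linarith : 0 ≤ n - 2) (sq_nonneg β)) hε]

lemma weightedCosine_bounds_of_two_le_card (hι : 2 ≤ Fintype.card ι) (hg : ‖g‖ = 1)
    (hsymm : ∀ x, w (-x) = w x ∨ 0 ≤ x * w x) (hw : ∀ x, |w x| ≤ β) (hε : 0 ≤ ε)
    (hω : ω ∈ incoherentTuples ι g (ε / 5))
    (hV : |∑ i, w ⟪g, ω i⟫ ^ 2 - Fintype.card ι * V| ≤ Fintype.card ι * δ)
    (hL : 0 < V - δ - (Fintype.card ι - 1) * β ^ 2 * ε) :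
    (⟪g, weightedSum w g ω⟫ + ⟪g, weightedSum w g (tupleReflection w g ω)⟫) /
          √(Fintype.card ι * (V + δ + (Fintype.card ι - 1) * β ^ 2 * ε)) ≤
        weightedCosine w g ω + weightedCosine w g (tupleReflection w g ω) ∧
      weightedCosine w g ω + weightedCosine w g (tupleReflection w g ω) ≤
        (⟪g, weightedSum w g ω⟫ + ⟪g, weightedSum w g (tupleReflection w g ω)⟫) /
          √(Fintype.card ι * (V - δ - (Fintype.card ι - 1) * β ^ 2 * ε)) := by
  have hε₁ : ε ≤ 1 := (lt_one_of_variance_margin_pos hι hw hV hε hL).le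
  obtain ⟨hlow, hupp, hsmall⟩ := norm_sq_weightedSum_bounds hι hw hε hε₁
    (fun i => (hω.1 i).le) (fun i j hij => by linarith [hω.2 i j hij]) hV hL.le
  obtain ⟨hlow', hupp', hsmall'⟩ := norm_sq_weightedSum_bounds (ω := tupleReflection w g ω)
    hι hw hε hε₁ (fun i => (abs_inner_weightReflection _).trans_le (hω.1 i).le)
    (fun _ _ => abs_inner_weightReflection_le_of_mem_incoherentTuples hg hε₁ hω)
    (by simpa only [tupleReflection, weight_inner_weightReflection] using hV) hL.le
  have hlpos : 0 < √(Fintype.card ι * (V - δ - (Fintype.card ι - 1) * β ^ 2 * ε)) :=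
    sqrt_pos.2 (mul_pos (by positivity) hL)
  have hp := sqrt_le_iff.2 ⟨norm_nonneg _, hlow⟩
  have hq := sqrt_le_iff.2 ⟨norm_nonneg _, hlow'⟩
  have hpq := (norm_sq_sub_inner_sq_weightedSum_tupleReflection (w := w) hg ω).symm
  have hnonneg := inner_weightedSum_add_inner_weightedSum_tupleReflection_nonneg hsymm ω (g := g)
  have hUpos := (pow_pos (hlpos.trans_le hp) 2).trans_le ((le_add_of_nonneg_right
    (by positivity)).trans hupp)
  rw [← sq_sqrt hUpos.le] at hupp hupp'
  exact ⟨add_div_le_div_add_div (sqrt_pos.2 hUpos) (hlpos.trans_le hp) (hlpos.trans_le hq) hpq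
    hnonneg hupp hupp' hsmall hsmall', div_add_div_le_add_div hlpos hp hq hpq hnonneg⟩

lemma norm_sq_weightedSum_of_unique [Unique ι] (ω : ι → sphere (0 : E) 1) :
    ‖weightedSum w g ω‖ ^ 2 = ∑ i, w ⟪g, ω i⟫ ^ 2 := by
  rw [weightedSum, Fintype.sum_unique, Fintype.sum_unique, norm_smul, norm_eq_of_mem_sphere,
    mul_one, norm_eq_abs, sq_abs]

lemma weightedCosine_bounds_of_unique [Unique ι] (hsymm : ∀ x, w (-x) = w x ∨ 0 ≤ x * w x)
    (hV : |∑ i, w ⟪g, ω i⟫ ^ 2 - V| ≤ δ) (hL : 0 < V - δ) :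
    (⟪g, weightedSum w g ω⟫ + ⟪g, weightedSum w g (tupleReflection w g ω)⟫) / √(V + δ) ≤
        weightedCosine w g ω + weightedCosine w g (tupleReflection w g ω) ∧
      weightedCosine w g ω + weightedCosine w g (tupleReflection w g ω) ≤
        (⟪g, weightedSum w g ω⟫ + ⟪g, weightedSum w g (tupleReflection w g ω)⟫) / √(V - δ) := by
  have hnorm : ‖weightedSum w g (tupleReflection w g ω)‖ = ‖weightedSum w g ω‖ := by
    rw [← pow_left_inj₀ (norm_nonneg _) (norm_nonneg _) two_ne_zero, norm_sq_weightedSum_of_unique,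
      norm_sq_weightedSum_of_unique]
    simp only [tupleReflection, weight_inner_weightReflection]
  have hnonneg := inner_weightedSum_add_inner_weightedSum_tupleReflection_nonneg hsymm ω (g := g)
  rw [← norm_sq_weightedSum_of_unique, abs_le] at hV
  have hlow : √(V - δ) ≤ ‖weightedSum w g ω‖ :=
    sqrt_le_iff.2 ⟨norm_nonneg _, by linarith [hV.1]⟩
  have hupp : ‖weightedSum w g ω‖ ≤ √(V + δ) := le_sqrt_of_sq_le (by linarith [hV.2])
  have hpos := sqrt_pos.2 hL
  rw [weightedCosine, weightedCosine, hnorm, ← add_div]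
  exact ⟨div_le_div_of_nonneg_left hnonneg (hpos.trans_le hlow) hupp,
    div_le_div_of_nonneg_left hnonneg hpos hlow⟩

/-- The good event: the unit vectors are nearly orthogonal to each other and to `g`, and the
empirical mean of the squared weights is within `δ` of `V`. The tolerance `ε / 5` leaves room for
the reflected tuple, whose mutual inner products can be larger. -/
def goodEvent (ι : Type*) [Fintype ι] (w : ℝ → ℝ) (g : E) (ε δ V : ℝ) :
    Set (ι → sphere (0 : E) 1) :=
  incoherentTuples ι g (ε / 5) ∩
    {ω | |∑ i, w ⟪g, ω i⟫ ^ 2 - Fintype.card ι * V| < Fintype.card ι * δ}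

lemma weightedCosine_bounds [Nonempty ι] (hg : ‖g‖ = 1)
    (hsymm : ∀ x, w (-x) = w x ∨ 0 ≤ x * w x) (hw : ∀ x, |w x| ≤ β) (hε : 0 ≤ ε)
    (hω : ω ∈ goodEvent ι w g ε δ V)
    (hL : 0 < V - δ - (Fintype.card ι - 1) * β ^ 2 * ε) :
    (⟪g, weightedSum w g ω⟫ + ⟪g, weightedSum w g (tupleReflection w g ω)⟫) /
          √(Fintype.card ι * (V + δ + (Fintype.card ι - 1) * β ^ 2 * ε)) ≤
        weightedCosine w g ω + weightedCosine w g (tupleReflection w g ω) ∧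
      weightedCosine w g ω + weightedCosine w g (tupleReflection w g ω) ≤
        (⟪g, weightedSum w g ω⟫ + ⟪g, weightedSum w g (tupleReflection w g ω)⟫) /
          √(Fintype.card ι * (V - δ - (Fintype.card ι - 1) * β ^ 2 * ε)) := by
  obtain ⟨hincoherent, hV :
    |∑ i, w ⟪g, ω i⟫ ^ 2 - Fintype.card ι * V| < Fintype.card ι * δ⟩ := hω
  rcases (Nat.one_le_iff_ne_zero.2 Fintype.card_ne_zero : 1 ≤ Fintype.card ι).eq_or_lt'
    with hι | hι
  · obtain ⟨_⟩ := Fintype.card_eq_one_iff_nonempty_unique.1 hι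
    simp only [hι, Nat.cast_one, sub_self, zero_mul, sub_zero, add_zero, one_mul] at hV hL ⊢
    exact weightedCosine_bounds_of_unique hsymm hV.le hL
  · exact weightedCosine_bounds_of_two_le_card hι hg hsymm hw hε hincoherent hV.le hL

end GoodEvent

section Probability

variable {E : Type*} [NormedAddCommGroup E] [InnerProductSpace ℝ E] [FiniteDimensional ℝ E]
  [MeasurableSpace E] [BorelSpace E] {n : ℕ} {g : E} {w : ℝ → ℝ} {β t ε δ V : ℝ}

lemma measurableSet_incoherentTuples (g : E) (t : ℝ) :
    MeasurableSet (incoherentTuples (Fin n) g t) := by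
  have hentry (i : Fin n) : MeasurableSet {ω : Fin n → sphere (0 : E) 1 | |⟪g, ω i⟫| < t} :=
    measurableSet_lt (by fun_prop) measurable_const
  have hpair (i j : Fin n) :
      MeasurableSet {ω : Fin n → sphere (0 : E) 1 | |⟪(ω i : E), ω j⟫| < t} :=
    measurableSet_lt (by fun_prop) measurable_const
  simp only [incoherentTuples, ofPred_and, ofPred_forall]
  exact (MeasurableSet.iInter hentry).inter
    (.iInter fun i => .iInter fun j => .iInter fun _ => hpair i j)

lemma measurable_weightedSum (hw : Measurable w) (g : E) :
    Measurable (weightedSum w g : (Fin n → sphere (0 : E) 1) → E) := by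
  unfold weightedSum
  fun_prop

lemma measurePreserving_tupleReflection [Nontrivial E] (hw : Measurable w) (g : E) :
    MeasurePreserving (tupleReflection w g) (Measure.pi fun _ : Fin n => uniformSphere E)
      (Measure.pi fun _ : Fin n => uniformSphere E) :=
  measurePreserving_pi _ _ fun _ => measurePreserving_weightReflection hw g

lemma pi_uniformSphere_le_abs_inner_le [Nontrivial E] (hg : ‖g‖ = 1) (ht : 0 ≤ t) (i : Fin n) :
    (Measure.pi fun _ : Fin n => uniformSphere E).real {ω | t ≤ |⟪g, ω i⟫|} ≤
      2 * exp (-(3 / 8 * Module.finrank ℝ E * t ^ 2)) := by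
  have hmeas : MeasurableSet {u : sphere (0 : E) 1 | t ≤ |⟪g, u⟫|} :=
    measurableSet_le measurable_const (by fun_prop)
  exact ((measurePreserving_eval (fun _ : Fin n => uniformSphere E) i).measureReal_preimage
    hmeas.nullMeasurableSet).trans_le (uniformSphere_le_abs_inner_le hg ht)

lemma pi_uniformSphere_le_abs_inner_pair_le [Nontrivial E] (ht : 0 ≤ t) {i j : Fin n}
    (hij : i ≠ j) :
    (Measure.pi fun _ : Fin n => uniformSphere E).real {ω | t ≤ |⟪(ω i : E), ω j⟫|} ≤
      2 * exp (-(3 / 8 * Module.finrank ℝ E * t ^ 2)) := by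
  have hmeas : MeasurableSet
      {p : sphere (0 : E) 1 × sphere (0 : E) 1 | t ≤ |⟪(p.1 : E), p.2⟫|} :=
    measurableSet_le measurable_const (by fun_prop)
  exact ((measurePreserving_eval_prodMk (fun _ : Fin n => uniformSphere E)
    hij).measureReal_preimage hmeas.nullMeasurableSet).trans_le
      (measureReal_prod_le_of_forall_preimage_le hmeas fun u =>
        uniformSphere_le_abs_inner_le (norm_eq_of_mem_sphere u) ht)

lemma pi_uniformSphere_compl_incoherentTuples_le [Nontrivial E] (hg : ‖g‖ = 1) (ht : 0 ≤ t) :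
    (Measure.pi fun _ : Fin n => uniformSphere E).real (incoherentTuples (Fin n) g t)ᶜ ≤
      n * (n + 1) * exp (-(3 / 8 * Module.finrank ℝ E * t ^ 2)) := by
  set P := Measure.pi fun _ : Fin n => uniformSphere E
  set p := exp (-(3 / 8 * Module.finrank ℝ E * t ^ 2))
  have hrow (j : Fin n) :
      P.real ({ω | t ≤ |⟪g, ω j⟫|} ∪ ⋃ i ∈ Finset.Iio j, {ω | t ≤ |⟪(ω i : E), ω j⟫|}) ≤
        2 * p + j * (2 * p) :=
    calc _ ≤ P.real {ω | t ≤ |⟪g, ω j⟫|} +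
          ∑ i ∈ Finset.Iio j, P.real {ω | t ≤ |⟪(ω i : E), ω j⟫|} :=
          (measureReal_union_le _ _).trans (add_le_add_right (measureReal_biUnion_finset_le _ _) _)
      _ ≤ 2 * p + ∑ i ∈ Finset.Iio j, 2 * p :=
          add_le_add (pi_uniformSphere_le_abs_inner_le hg ht j) (Finset.sum_le_sum fun i hi =>
            pi_uniformSphere_le_abs_inner_pair_le ht (Finset.mem_Iio.1 hi).ne)
      _ = 2 * p + j * (2 * p) := by rw [Finset.sum_const, Fin.card_Iio, nsmul_eq_mul]
  calc P.real (incoherentTuples (Fin n) g t)ᶜ ≤ ∑ j : Fin n, (2 * p + j * (2 * p)) :=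
        (measureReal_mono (compl_incoherentTuples_subset g t)).trans
          ((measureReal_iUnion_fintype_le _).trans (Finset.sum_le_sum fun j _ => hrow j))
    _ = n * (2 * p) + (∑ j : Fin n, (j : ℝ)) * 2 * p := by
        rw [Finset.sum_add_distrib, Finset.sum_const, Finset.card_univ, Fintype.card_fin,
          nsmul_eq_mul, ← Finset.sum_mul, mul_assoc _ 2 p]
    _ = n * (n + 1) * p := by
        rw [sum_fin_val_mul_two]
        ring

lemma measurableSet_goodEvent (hw : Measurable w) (g : E) (ε δ V : ℝ) :
    MeasurableSet (goodEvent (Fin n) w g ε δ V) :=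
  (measurableSet_incoherentTuples g _).inter (measurableSet_lt (by fun_prop) measurable_const)

lemma pi_uniformSphere_compl_goodEvent_le [Nontrivial E] (hn : 1 ≤ n) (hg : ‖g‖ = 1)
    (hw : Measurable w) {a b : ℝ} (hab : ∀ x, w x ^ 2 ∈ Icc a b) (hε : 0 ≤ ε) (hδ : 0 ≤ δ) :
    (Measure.pi fun _ : Fin n => uniformSphere E).real
        (goodEvent (Fin n) w g ε δ (∫ u, w ⟪g, (u : E)⟫ ^ 2 ∂uniformSphere E))ᶜ ≤
      n * (n + 1) * exp (-(3 / 200 * Module.finrank ℝ E * ε ^ 2)) +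
        2 * exp (-2 * n * δ ^ 2 / (b - a) ^ 2) := by
  have hdev := measureReal_le_abs_sum_sub_integral_le (ι := Fin n) (μ := uniformSphere E)
    (f := fun u => w ⟪g, (u : E)⟫ ^ 2) (by fun_prop) (fun u => hab _)
    (mul_nonneg n.cast_nonneg hδ)
  have hexponent : -2 * (n * δ) ^ 2 / (n * (b - a) ^ 2) = -2 * n * δ ^ 2 / (b - a) ^ 2 := by
    rw [← mul_div_mul_left _ ((b - a) ^ 2) (by positivity : (n : ℝ) ≠ 0)]
    ring_nf
  have hincoherent := pi_uniformSphere_compl_incoherentTuples_le (n := n) (t := ε / 5) hg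
    (by positivity)
  rw [Fintype.card_fin, hexponent] at hdev
  rw [show 3 / 8 * Module.finrank ℝ E * (ε / 5) ^ 2 = 3 / 200 * Module.finrank ℝ E * ε ^ 2 by ring]
    at hincoherent
  rw [goodEvent, compl_inter]
  refine (measureReal_union_le _ _).trans (add_le_add hincoherent ?_)
  simpa only [compl_ofPred, not_lt, Fintype.card_fin] using hdev

lemma integrable_weightedCosine [Nontrivial E] (hg : ‖g‖ = 1) (hw : Measurable w) :
    Integrable (weightedCosine w g) (Measure.pi fun _ : Fin n => uniformSphere E) := by
  have hS := measurable_weightedSum (n := n) hw g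
  have hmeas : Measurable (weightedCosine w g : (Fin n → sphere (0 : E) 1) → ℝ) := by
    unfold weightedCosine
    fun_prop
  exact .of_bound hmeas.aestronglyMeasurable 1 (ae_of_all _ (abs_weightedCosine_le_one hg))

lemma integrable_inner_weightedSum [Nontrivial E] (hg : ‖g‖ = 1) (hw : Measurable w)
    (hβ : ∀ x, |w x| ≤ β) :
    Integrable (fun ω => ⟪g, weightedSum w g ω⟫)
      (Measure.pi fun _ : Fin n => uniformSphere E) := by
  have hS := measurable_weightedSum (n := n) hw g
  exact .of_bound (by fun_prop) _ (ae_of_all _ (abs_inner_weightedSum_le_card_mul hg hβ))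

lemma integral_inner_weightedSum [Nontrivial E] (hg : ‖g‖ = 1) (hw : Measurable w)
    (hβ : ∀ x, |w x| ≤ β) :
    ∫ ω, ⟪g, weightedSum w g ω⟫ ∂(Measure.pi fun _ : Fin n => uniformSphere E) =
      n * ∫ u, w ⟪g, (u : E)⟫ * ⟪g, (u : E)⟫ ∂uniformSphere E := by
  have hmeas : Measurable fun u : sphere (0 : E) 1 => w ⟪g, (u : E)⟫ * ⟪g, (u : E)⟫ := by fun_prop
  have hint : Integrable (fun u : sphere (0 : E) 1 => w ⟪g, (u : E)⟫ * ⟪g, (u : E)⟫)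
      (uniformSphere E) := by
    refine .of_bound hmeas.aestronglyMeasurable β (ae_of_all _ fun u => ?_)
    have hsingle := abs_inner_weightedSum_le_card_mul hg hβ fun _ : Fin 1 => u
    simpa only [inner_weightedSum, Fin.sum_univ_one, Fintype.card_fin, Nat.cast_one,
      one_mul, norm_eq_abs] using hsingle
  simp only [inner_weightedSum]
  rw [integral_finsetSum _ fun i _ => show Integrable
    (fun ω : Fin n → sphere (0 : E) 1 => w ⟪g, ω i⟫ * ⟪g, ω i⟫) _ from
    (measurePreserving_eval (fun _ => uniformSphere E) i).integrable_comp_of_integrable hint]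
  simp only [integral_comp_eval (μ := fun _ : Fin n => uniformSphere E)
    hmeas.aestronglyMeasurable, Finset.sum_const, Finset.card_univ, Fintype.card_fin, nsmul_eq_mul]

end Probability

theorem agrest_expected_cosine_bounds_general {E : Type*} [NormedAddCommGroup E]
    [InnerProductSpace ℝ E] [FiniteDimensional ℝ E] [MeasurableSpace E] [BorelSpace E] {n : ℕ}
    (hn : 1 ≤ n) {g : E} (hg : ‖g‖ = 1) {w : ℝ → ℝ} (hw : Measurable w)
    (hsymm : ∀ x, w (-x) = w x ∨ 0 ≤ x * w x) {a β : ℝ} (ha : ∀ x, a ≤ w x ^ 2)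
    (hβ : ∀ x, |w x| ≤ β) {ε₁ ε₂ : ℝ} (hε₁ : 0 ≤ ε₁) (hε₂ : 0 ≤ ε₂) {μ A V K : ℝ}
    (hμ : μ = ∫ ω, weightedCosine w g ω ∂(Measure.pi fun _ : Fin n => uniformSphere E))
    (hA : A = ∫ u, w ⟪g, (u : E)⟫ * ⟪g, (u : E)⟫ ∂uniformSphere E)
    (hV : V = ∫ u, w ⟪g, (u : E)⟫ ^ 2 ∂uniformSphere E)
    (hK : K = n * (n + 1) * exp (-(3 / 200 * Module.finrank ℝ E * ε₁ ^ 2)) +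
      2 * exp (-2 * n * ε₂ ^ 2 / (β ^ 2 - a) ^ 2))
    (hL : 0 < V - ε₂ - (n - 1) * β ^ 2 * ε₁) :
    μ ≤ √n * A / √(V - ε₂ - (n - 1) * β ^ 2 * ε₁) +
        (1 + √n * β / √(V - ε₂ - (n - 1) * β ^ 2 * ε₁)) * K ∧
      √n * A / √(V + ε₂ + (n - 1) * β ^ 2 * ε₁) -
        (1 + √n * β / √(V + ε₂ + (n - 1) * β ^ 2 * ε₁)) * K ≤ μ := by
  have : Nontrivial E := nontrivial_of_ne g 0 (norm_ne_zero_iff.1 (by simp [hg]))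
  have hβ₀ : 0 ≤ β := (abs_nonneg _).trans (hβ 0)
  have hbad := pi_uniformSphere_compl_goodEvent_le hn hg hw
    (fun x => ⟨ha x, sq_le_sq.2 ((hβ x).trans (le_abs_self β))⟩) hε₁ hε₂
  rw [← hV, ← hK] at hbad
  have hB := (measurableSet_goodEvent (n := n) hw g ε₁ ε₂ V).compl
  have hT := measurePreserving_tupleReflection (n := n) hw g
  have hcos := integrable_weightedCosine (n := n) hg hw
  have hnum := integrable_inner_weightedSum (n := n) hg hw hβ
  have : NeZero n := ⟨Nat.one_le_iff_ne_zero.1 hn⟩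
  have hgood {ω : Fin n → sphere (0 : E) 1} (hω : ω ∉ (goodEvent (Fin n) w g ε₁ ε₂ V)ᶜ) :=
    weightedCosine_bounds hg hsymm hβ hε₁ (not_notMem.1 hω) (by rwa [Fintype.card_fin])
  have hbound := abs_inner_weightedSum_le_card_mul (ι := Fin n) hg hβ
  simp only [Fintype.card_fin] at hgood hbound
  have hupp := integral_le_integral_div_add_mul_measureReal hT hcos hnum (sqrt_nonneg _)
    (abs_weightedCosine_le_one hg) hbound hB fun ω hω => (hgood hω).2
  have hlow := integral_div_sub_mul_measureReal_le_integral hT hcos hnum (sqrt_nonneg _)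
    (abs_weightedCosine_le_one hg) hbound hB fun ω hω => (hgood hω).1
  rw [← hμ, integral_inner_weightedSum hg hw hβ, ← hA] at hupp hlow
  simp only [← mul_div_sqrt_mul n.cast_nonneg]
  exact ⟨hupp.trans (by gcongr), (sub_le_sub_left (by gcongr) _).trans hlow⟩

section AgrestWeight

/-- The AGREST weight as a function of the component `x = ⟪g, u⟫` of the sample `u`. -/
noncomputable def agrestWeight (s β x : ℝ) : ℝ :=
  if -s < x then 1 - β else -β

variable {s β : ℝ}

lemma measurable_agrestWeight : Measurable (agrestWeight s β) :=
  Measurable.ite measurableSet_Ioi measurable_const measurable_const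

lemma agrestWeight_neg_eq_or_mul_nonneg (hβ₀ : 0 ≤ β) (hβ₁ : β ≤ 1) (x : ℝ) :
    agrestWeight s β (-x) = agrestWeight s β x ∨ 0 ≤ x * agrestWeight s β x := by
  unfold agrestWeight
  split_ifs with hneg hpos
  · exact .inl rfl
  · exact .inr (mul_nonneg_of_nonpos_of_nonpos (by linarith) (neg_nonpos.2 hβ₀))
  · exact .inr (mul_nonneg (by linarith) (sub_nonneg.2 hβ₁))
  · exact .inl rfl

lemma abs_agrestWeight_le (hβ : 1 / 2 ≤ β) (x : ℝ) : |agrestWeight s β x| ≤ β := by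
  rw [agrestWeight, abs_le]
  split_ifs <;> constructor <;> linarith

lemma sq_one_sub_le_agrestWeight_sq (hβ : 1 / 2 ≤ β) (x : ℝ) :
    (1 - β) ^ 2 ≤ agrestWeight s β x ^ 2 := by
  rw [agrestWeight]
  split_ifs
  · exact le_rfl
  · nlinarith

lemma inner_Ghat_div_norm_Ghat {d n : ℕ} (hn : n ≠ 0) (g : EuclideanSpace ℝ (Fin d))
    (ω : Fin n → sphere (0 : EuclideanSpace ℝ (Fin d)) 1) :
    ⟪g, Ghat d n g s β ω⟫ / ‖Ghat d n g s β ω‖ = weightedCosine (agrestWeight s β) g ω := by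
  have hn' : 0 < 1 / (n : ℝ) := by positivity
  have hGhat : Ghat d n g s β ω = (1 / (n : ℝ)) • weightedSum (agrestWeight s β) g ω := rfl
  rw [hGhat, real_inner_smul_right, norm_smul, norm_of_nonneg hn'.le,
    mul_div_mul_left _ _ hn'.ne', weightedCosine]

end AgrestWeight

/-- **Lemma 6: two-sided bound on the expected cosine similarity of the AGREST
estimator.** With `μ = E[⟨g,Ĝ⟩/‖Ĝ‖]`, `A = E[φ̂(u₁)⟨g,u₁⟩]`, `V = E[φ̂(u₁)²]`,
and `K = n(n+1)·exp(−Cdε₁²) + 2·exp(−2nε₂²/(2β−1)²)`, if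
`V − ε₂ − (n−1)β²ε₁ > 0`, then
`μ ≤ √n·A/√(V−ε₂−(n−1)β²ε₁) + (1 + √n·β/√(V−ε₂−(n−1)β²ε₁))·K` and
`μ ≥ √n·A/√(V+ε₂+(n−1)β²ε₁) − (1 + √n·β/√(V+ε₂+(n−1)β²ε₁))·K`. -/
theorem agrest_expected_cosine_bounds :
    ∃ C : ℝ, 0 < C ∧ ∀ d n : ℕ, 2 ≤ d → 1 ≤ n →
      ∀ g : EuclideanSpace ℝ (Fin d), ‖g‖ = 1 →
      ∀ s ∈ Set.Icc (0 : ℝ) 1, ∀ β ∈ Set.Ioo (1/2 : ℝ) 1,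
      ∀ ε₁ : ℝ, 0 < ε₁ → ∀ ε₂ : ℝ, 0 < ε₂ →
      ∀ μ A V K : ℝ,
        μ = (∫ ω : Fin n → (sphere (0 : EuclideanSpace ℝ (Fin d)) 1),
              (⟪g, Ghat d n g s β ω⟫ / ‖Ghat d n g s β ω‖)
              ∂(Measure.pi (fun _ : Fin n => sphereUniform d))) →
        A = (∫ u, phiHat d g s β u * ⟪g, (u : EuclideanSpace ℝ (Fin d))⟫
              ∂(sphereUniform d)) →
        V = (∫ u, (phiHat d g s β u) ^ 2 ∂(sphereUniform d)) →
        K = n * (n + 1) * Real.exp (-(C * d * ε₁ ^ 2))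
              + 2 * Real.exp (-2 * n * ε₂ ^ 2 / (2 * β - 1) ^ 2) →
        0 < V - ε₂ - ((n : ℝ) - 1) * β ^ 2 * ε₁ →
        (μ ≤ Real.sqrt n * A / Real.sqrt (V - ε₂ - ((n : ℝ) - 1) * β ^ 2 * ε₁)
              + (1 + Real.sqrt n * β / Real.sqrt (V - ε₂ - ((n : ℝ) - 1) * β ^ 2 * ε₁)) * K) ∧
        (Real.sqrt n * A / Real.sqrt (V + ε₂ + ((n : ℝ) - 1) * β ^ 2 * ε₁)
              - (1 + Real.sqrt n * β / Real.sqrt (V + ε₂ + ((n : ℝ) - 1) * β ^ 2 * ε₁)) * K ≤ μ) := by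
  refine ⟨3 / 200, by norm_num,
    fun d n _ hn g hg s _ β hβ ε₁ hε₁ ε₂ hε₂ μ A V K hμ hA hV hK hL =>
      agrest_expected_cosine_bounds_general hn hg measurable_agrestWeight
        (agrestWeight_neg_eq_or_mul_nonneg (by linarith [hβ.1]) hβ.2.le)
        (sq_one_sub_le_agrestWeight_sq hβ.1.le) (abs_agrestWeight_le hβ.1.le)
        hε₁.le hε₂.le ?_ hA hV ?_ hL⟩
  · simpa only [inner_Ghat_div_norm_Ghat (Nat.one_le_iff_ne_zero.1 hn), sphereUniform,
      uniformSphere] using hμ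
  · rw [hK, finrank_euclideanSpace_fin, show β ^ 2 - (1 - β) ^ 2 = 2 * β - 1 by ring]
end

section
/- Fix q ∈ [1/2, 1). For each integer d ≥ 2, let g_d ∈ ℝ^d be a unit vector, let u_d be uniformly distributed on S^{d-1}, and let s_d ∈ [0,1) be the unique value with P[⟨g_d, u_d⟩ ≥ −s_d] = q. Then there exist constants 0 < a ≤ b and an integer D₀ such that for all d ≥ D₀: a·d^{−1/2} ≤ Γ(d/2)·(1 − s_d²)^{(d−1)/2} / (2√π·Γ((d+1)/2)) ≤ b·d^{−1/2}. -/
open MeasureTheory Metric Set Real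
open scoped RealInnerProductSpace

/-!
Everything but the cap condition is the ratio `Γ(d/2) / Γ((d+1)/2)`, which Wendel's inequality
`Γ(x + s) ≤ x ^ s Γ(x)`, applied at `x = d/2` and `x = (d+1)/2` with `s = 1/2`, pins between
`d ^ (-1/2)` and `2 d ^ (-1/2)`.

The cap condition only has to keep `(1 - s ^ 2) ^ ((d-1)/2)` away from `0`, for which
`s ^ 2 = O(1/d)` suffices. By rotation invariance all directions have the same second moment, and
over an orthonormal basis these add up to `1`; so `⟨g, u⟩` has second moment `1/d`, and Chebyshev's
inequality turns a fixed tail probability beyond `s` into `d s ^ 2 = O(1)`.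
-/

section SphereMeasure

variable {E : Type*} [NormedAddCommGroup E] [MeasurableSpace E] [BorelSpace E]

open scoped Pointwise in
lemma measurePreserving_restrict_toSphere [NormedSpace ℝ E] {μ : Measure E} {ρ : E ≃ₗᵢ[ℝ] E}
    (hρ : MeasurePreserving ρ μ μ) (hmaps : MapsTo ρ (sphere 0 1) (sphere 0 1)) :
    MeasurePreserving (hmaps.restrict ρ _ _) μ.toSphere μ.toSphere := by
  have hmeas : Measurable (hmaps.restrict ρ _ _) :=
    (ρ.continuous.restrict hmaps).measurable
  refine ⟨hmeas, Measure.ext fun S hS ↦ ?_⟩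
  have hcone : Ioo (0 : ℝ) 1 • ((↑) '' (hmaps.restrict ρ _ _ ⁻¹' S) : Set E) =
      ρ ⁻¹' (Ioo (0 : ℝ) 1 • ((↑) '' S)) := by
    ext x
    constructor
    · rintro ⟨r, hr, _, ⟨u, hu, rfl⟩, rfl⟩
      exact ⟨r, hr, _, ⟨_, hu, rfl⟩, (ρ.map_smul r u).symm⟩
    · rintro ⟨r, hr, _, ⟨w, hw, rfl⟩, hx⟩
      have hmem : ρ.symm w ∈ sphere (0 : E) 1 := by simp
      have hpre : hmaps.restrict ρ _ _ ⟨ρ.symm w, hmem⟩ = w := Subtype.ext (ρ.apply_symm_apply w)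
      refine ⟨r, hr, ρ.symm w, ⟨⟨_, hmem⟩, by rwa [mem_preimage, hpre], rfl⟩, ρ.injective ?_⟩
      simpa using hx
  rw [Measure.map_apply hmeas hS, Measure.toSphere_apply' _ (hmeas hS),
    Measure.toSphere_apply' _ hS, hcone,
    hρ.measure_preimage_emb ρ.toHomeomorph.measurableEmbedding]

variable [InnerProductSpace ℝ E] [FiniteDimensional ℝ E]

lemma integral_inner_sq_toSphere_eq_of_norm_eq {v w : E} (h : ‖v‖ = ‖w‖) :
    ∫ u : sphere (0 : E) 1, ⟪v, (u : E)⟫ ^ 2 ∂(volume : Measure E).toSphere =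
      ∫ u : sphere (0 : E) 1, ⟪w, (u : E)⟫ ^ 2 ∂(volume : Measure E).toSphere := by
  let ρ : E ≃ₗᵢ[ℝ] E := (ℝ ∙ (v - w))ᗮ.reflection
  have hρv : ρ v = w := Submodule.reflection_sub h
  have hmaps : MapsTo ρ (sphere 0 1) (sphere 0 1) := fun x hx ↦ by simpa using hx
  have hemb : MeasurableEmbedding (hmaps.restrict ρ _ _) :=
    ((ρ.continuous.restrict hmaps).isClosedEmbedding
      (hmaps.restrict_inj.2 ρ.injective.injOn)).measurableEmbedding
  rw [← (measurePreserving_restrict_toSphere ρ.measurePreserving hmaps).integral_comp hemb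
    fun u : sphere (0 : E) 1 ↦ ⟪w, (u : E)⟫ ^ 2]
  simp only [MapsTo.val_restrict_apply, ← hρv, ρ.inner_map_map]

lemma integrable_inner_sq_sphere (ν : Measure (sphere (0 : E) 1)) [IsFiniteMeasure ν] (v : E) :
    Integrable (fun u : sphere (0 : E) 1 ↦ ⟪v, (u : E)⟫ ^ 2) ν :=
  Continuous.integrable_of_hasCompactSupport (by fun_prop) (.of_compactSpace _)

lemma finrank_mul_integral_inner_sq_toSphere (v : E) :
    Module.finrank ℝ E * ∫ u : sphere (0 : E) 1, ⟪v, (u : E)⟫ ^ 2 ∂(volume : Measure E).toSphere =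
      ‖v‖ ^ 2 * (volume : Measure E).toSphere.real univ := by
  let b := stdOrthonormalBasis ℝ E
  have hsymm (i) : ∫ u : sphere (0 : E) 1, ⟪b i, (u : E)⟫ ^ 2 * ‖v‖ ^ 2 ∂volume.toSphere =
      ∫ u : sphere (0 : E) 1, ⟪v, (u : E)⟫ ^ 2 ∂volume.toSphere := by
    simpa only [real_inner_smul_left, mul_pow, mul_comm] using
      integral_inner_sq_toSphere_eq_of_norm_eq (v := ‖v‖ • b i) (w := v) (by simp [norm_smul])
  calc Module.finrank ℝ E * ∫ u : sphere (0 : E) 1, ⟪v, (u : E)⟫ ^ 2 ∂volume.toSphere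
      = ∑ i, ∫ u : sphere (0 : E) 1, ⟪b i, (u : E)⟫ ^ 2 * ‖v‖ ^ 2 ∂volume.toSphere := by
        simp [hsymm]
    _ = ∫ u : sphere (0 : E) 1, ∑ i, ⟪b i, (u : E)⟫ ^ 2 * ‖v‖ ^ 2 ∂volume.toSphere :=
        (integral_finsetSum _ fun i _ ↦ (integrable_inner_sq_sphere _ (b i)).mul_const _).symm
    _ = ‖v‖ ^ 2 * volume.toSphere.real univ := by
        simp_rw [← Finset.sum_mul, b.sum_sq_inner_right]
        simp [mul_comm]

instance [Nontrivial E] : NeZero (volume : Measure E).toSphere := ⟨Measure.toSphere_ne_zero _⟩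

end SphereMeasure

section Probability

variable {Ω : Type*} [MeasurableSpace Ω] {P : Measure Ω} [IsProbabilityMeasure P] {X : Ω → ℝ}

lemma min_measureReal_neg_le_le_measureReal_abs_le_abs (hX : Measurable X) (s : ℝ) :
    min (P.real {ω | -s ≤ X ω}) (1 - P.real {ω | -s ≤ X ω}) ≤ P.real {ω | |s| ≤ |X ω|} := by
  rcases le_total 0 s with hs | hs
  · refine (min_le_right _ _).trans ?_
    rw [← probReal_compl_eq_one_sub (measurableSet_le measurable_const hX)]
    refine measureReal_mono fun ω (hω : ¬ -s ≤ X ω) ↦ ?_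
    exact (abs_of_nonneg hs).trans_le (le_abs.2 (.inr (by linarith)))
  · refine (min_le_left _ _).trans (measureReal_mono fun ω (hω : -s ≤ X ω) ↦ ?_)
    exact (abs_of_nonpos hs).trans_le (hω.trans (le_abs_self _))

lemma min_measureReal_mul_sq_le_integral_sq (hX : Measurable X)
    (hint : Integrable (fun ω ↦ X ω ^ 2) P) (s : ℝ) :
    min (P.real {ω | -s ≤ X ω}) (1 - P.real {ω | -s ≤ X ω}) * s ^ 2 ≤ ∫ ω, X ω ^ 2 ∂P := by
  have hmarkov := mul_meas_ge_le_integral_of_nonneg (.of_forall fun ω ↦ sq_nonneg (X ω)) hint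
    (s ^ 2)
  simp only [sq_le_sq] at hmarkov
  refine le_trans ?_ (mul_comm (s ^ 2) _ ▸ hmarkov)
  gcongr
  exact min_measureReal_neg_le_le_measureReal_abs_le_abs hX s

end Probability

section SphereUniform

variable {d : ℕ}

instance [NeZero d] : IsProbabilityMeasure (sphereUniform d) := by
  unfold sphereUniform
  infer_instance

lemma natCast_mul_integral_inner_sq_sphereUniform [NeZero d] (v : EuclideanSpace ℝ (Fin d)) :
    d * ∫ u, ⟪v, (u : EuclideanSpace ℝ (Fin d))⟫ ^ 2 ∂sphereUniform d = ‖v‖ ^ 2 := by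
  have hmoment := finrank_mul_integral_inner_sq_toSphere v
  rw [finrank_euclideanSpace_fin] at hmoment
  rw [sphereUniform, integral_smul_measure, ENNReal.toReal_inv, ← measureReal_def, smul_eq_mul,
    mul_left_comm, hmoment, mul_left_comm, inv_mul_cancel₀ measureReal_univ_ne_zero, mul_one]

lemma min_mul_sq_le_norm_sq_of_cap [NeZero d] {v : EuclideanSpace ℝ (Fin d)} {s q : ℝ}
    (hcap : (sphereUniform d).real {u | -s ≤ ⟪v, (u : EuclideanSpace ℝ (Fin d))⟫} = q) :
    min q (1 - q) * (d * s ^ 2) ≤ ‖v‖ ^ 2 := by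
  have hchebyshev := min_measureReal_mul_sq_le_integral_sq (by fun_prop)
    (integrable_inner_sq_sphere (sphereUniform d) v) s
  rw [hcap] at hchebyshev
  calc min q (1 - q) * (d * s ^ 2) = d * (min q (1 - q) * s ^ 2) := by ring
    _ ≤ d * ∫ u, ⟪v, (u : EuclideanSpace ℝ (Fin d))⟫ ^ 2 ∂sphereUniform d := by gcongr
    _ = ‖v‖ ^ 2 := natCast_mul_integral_inner_sq_sphereUniform v

end SphereUniform

lemma Gamma_add_le_rpow_mul_Gamma {x s : ℝ} (hx : 0 < x) (hs : s ∈ Ioo (0 : ℝ) 1) :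
    Gamma (x + s) ≤ x ^ s * Gamma x := by
  have hΓ : 0 < Gamma x := Gamma_pos_of_pos hx
  calc Gamma (x + s) = Gamma ((1 - s) * x + s * (x + 1)) := by ring_nf
    _ ≤ Gamma x ^ (1 - s) * Gamma (x + 1) ^ s :=
        Gamma_mul_add_mul_le_rpow_Gamma_mul_rpow_Gamma hx (by linarith) (by linarith [hs.2]) hs.1
          (by ring)
    _ = x ^ s * (Gamma x ^ (1 - s) * Gamma x ^ s) := by
        rw [Gamma_add_one hx.ne', mul_rpow hx.le hΓ.le]
        ring
    _ = x ^ s * Gamma x := by rw [← rpow_add hΓ, sub_add_cancel, rpow_one]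

lemma rpow_neg_half_le_Gamma_half_div {x : ℝ} (hx : 0 < x) :
    x ^ (-(1 / 2) : ℝ) ≤ Gamma (x / 2) / Gamma ((x + 1) / 2) := by
  have hwendel : Gamma ((x + 1) / 2) ≤ (x / 2) ^ (1 / 2 : ℝ) * Gamma (x / 2) := by
    rw [add_div]
    exact Gamma_add_le_rpow_mul_Gamma (by positivity) (by norm_num)
  rw [le_div_iff₀ (Gamma_pos_of_pos (by positivity)), rpow_neg hx.le,
    inv_mul_le_iff₀ (by positivity)]
  exact hwendel.trans (mul_le_mul_of_nonneg_right (by gcongr; linarith)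
    (Gamma_pos_of_pos (by positivity)).le)

lemma Gamma_half_div_le_two_mul_rpow_neg_half {x : ℝ} (hx : 1 ≤ x) :
    Gamma (x / 2) / Gamma ((x + 1) / 2) ≤ 2 * x ^ (-(1 / 2) : ℝ) := by
  have hx₀ : 0 < x := by linarith
  have hΓ : 0 < Gamma ((x + 1) / 2) := Gamma_pos_of_pos (by positivity)
  have hwendel : x / 2 * Gamma (x / 2) ≤ ((x + 1) / 2) ^ (1 / 2 : ℝ) * Gamma ((x + 1) / 2) := by
    rw [← Gamma_add_one (by positivity), show x / 2 + 1 = (x + 1) / 2 + 1 / 2 by ring]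
    exact Gamma_add_le_rpow_mul_Gamma (by positivity) (by norm_num)
  rw [div_le_iff₀ hΓ]
  calc Gamma (x / 2) = 2 / x * (x / 2 * Gamma (x / 2)) := by field_simp
    _ ≤ 2 / x * (((x + 1) / 2) ^ (1 / 2 : ℝ) * Gamma ((x + 1) / 2)) := by gcongr
    _ ≤ 2 / x * (x ^ (1 / 2 : ℝ) * Gamma ((x + 1) / 2)) := by gcongr; linarith
    _ = 2 * x ^ (-(1 / 2) : ℝ) * Gamma ((x + 1) / 2) := by
      rw [show (-(1 / 2) : ℝ) = 1 / 2 - 1 by norm_num, rpow_sub_one hx₀.ne']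
      ring

lemma exp_neg_le_one_sub_rpow {t p : ℝ} (ht₀ : 0 ≤ t) (ht : t ≤ 1 / 2) (hp : 0 ≤ p) :
    exp (-(2 * t * p)) ≤ (1 - t) ^ p := by
  have hpos : 0 < 1 - t := by linarith
  have hlog : -(2 * t) ≤ log (1 - t) := by
    refine le_trans ?_ (one_sub_inv_le_log_of_pos hpos)
    rw [neg_le_sub_iff_le_add, inv_le_iff_one_le_mul₀ hpos]
    nlinarith
  rw [rpow_def_of_pos hpos, exp_le_exp, ← neg_mul]
  exact mul_le_mul_of_nonneg_right hlog hp

lemma one_sub_rpow_mem_Icc {x t C : ℝ} (hx : 1 ≤ x) (ht : 0 ≤ t) (hxt : x * t ≤ C)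
    (hC : 2 * C ≤ x) : (1 - t) ^ ((x - 1) / 2) ∈ Icc (exp (-C)) 1 := by
  have ht_half : t ≤ 1 / 2 := le_of_mul_le_mul_left (by linarith) (zero_lt_one.trans_le hx)
  have hp : 0 ≤ (x - 1) / 2 := by linarith
  refine ⟨le_trans (exp_le_exp.2 ?_) (exp_neg_le_one_sub_rpow ht ht_half hp),
    rpow_le_one (by linarith) (by linarith) hp⟩
  linarith

theorem agrest_expectation_rate_general
    (q : ℝ) (hq : q ∈ Ioo (0 : ℝ) 1)
    (g : ∀ d : ℕ, EuclideanSpace ℝ (Fin d)) (s : ℕ → ℝ)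
    (hg : ∀ d : ℕ, 2 ≤ d → ‖g d‖ = 1)
    (hcap : ∀ d : ℕ, 2 ≤ d →
      (sphereUniform d {u : sphere (0 : EuclideanSpace ℝ (Fin d)) 1 |
          -s d ≤ ⟪g d, (u : EuclideanSpace ℝ (Fin d))⟫}).toReal = q) :
    ∃ a b : ℝ, 0 < a ∧ a ≤ b ∧ ∃ D₀ : ℕ, ∀ d : ℕ, D₀ ≤ d →
      a * (d : ℝ) ^ (-(1 / 2) : ℝ)
        ≤ Gamma ((d : ℝ) / 2) * (1 - s d ^ 2) ^ (((d : ℝ) - 1) / 2)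
            / (2 * √π * Gamma (((d : ℝ) + 1) / 2)) ∧
      Gamma ((d : ℝ) / 2) * (1 - s d ^ 2) ^ (((d : ℝ) - 1) / 2)
            / (2 * √π * Gamma (((d : ℝ) + 1) / 2))
        ≤ b * (d : ℝ) ^ (-(1 / 2) : ℝ) := by
  have hmin : 0 < min q (1 - q) := lt_min hq.1 (sub_pos.2 hq.2)
  set C : ℝ := 1 / min q (1 - q)
  have hexp : exp (-C) ≤ 1 := exp_le_one_iff.2 (neg_nonpos.2 (one_div_pos.2 hmin).le)
  refine ⟨exp (-C) / (2 * √π), 2 / (2 * √π), by positivity, by gcongr; linarith,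
    max 2 ⌈2 * C⌉₊, fun d hd ↦ ?_⟩
  have hd₂ : 2 ≤ d := (le_max_left _ _).trans hd
  have hdC : 2 * C ≤ d := Nat.ceil_le.1 ((le_max_right _ _).trans hd)
  have hd₁ : (1 : ℝ) ≤ d := by exact_mod_cast one_le_two.trans hd₂
  have : NeZero d := ⟨by lia⟩
  have hds : d * s d ^ 2 ≤ C :=
    (le_div_iff₀' hmin).2 (by simpa [hg d hd₂] using min_mul_sq_le_norm_sq_of_cap (hcap d hd₂))
  obtain ⟨hpow_ge, hpow_le⟩ := one_sub_rpow_mem_Icc hd₁ (sq_nonneg (s d)) hds hdC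
  have hpow_nonneg := (exp_pos _).le.trans hpow_ge
  have hΓ_ge := rpow_neg_half_le_Gamma_half_div (zero_lt_one.trans_le hd₁)
  have hΓ_le := Gamma_half_div_le_two_mul_rpow_neg_half hd₁
  rw [mul_comm (Gamma _), mul_div_mul_comm]
  refine ⟨by gcongr, ?_⟩
  calc _ ≤ 1 / (2 * √π) * (2 * (d : ℝ) ^ (-(1 / 2) : ℝ)) := by gcongr
    _ = 2 / (2 * √π) * (d : ℝ) ^ (-(1 / 2) : ℝ) := by ring

/-- **Lemma 7: `Θ(1/√d)` rate of the expected reweighted inner product.**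
Fix `q ∈ [1/2, 1)`. For each `d ≥ 2`, let `g d` be a unit vector in `ℝ^d` and
`s d ∈ [0,1)` the value with `P[⟨g d, u⟩ ≥ −s d] = q` for `u` uniform on
`S^{d-1}`. Then there are `0 < a ≤ b` and `D₀` such that for all `d ≥ D₀`,
`a·d^(−1/2) ≤ Γ(d/2)·(1−(s d)²)^((d−1)/2)/(2√π·Γ((d+1)/2)) ≤ b·d^(−1/2)`. -/
theorem agrest_expectation_rate
    (q : ℝ) (hq : q ∈ Set.Ico (1/2 : ℝ) 1)
    (g : ∀ d : ℕ, EuclideanSpace ℝ (Fin d)) (s : ℕ → ℝ)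
    (hg : ∀ d : ℕ, 2 ≤ d → ‖g d‖ = 1)
    (hs : ∀ d : ℕ, 2 ≤ d → s d ∈ Set.Ico (0 : ℝ) 1)
    (hcap : ∀ d : ℕ, 2 ≤ d →
      (sphereUniform d {u : (sphere (0 : EuclideanSpace ℝ (Fin d)) 1) |
          -(s d) ≤ ⟪g d, (u : EuclideanSpace ℝ (Fin d))⟫}).toReal = q) :
    ∃ a b : ℝ, 0 < a ∧ a ≤ b ∧ ∃ D₀ : ℕ, ∀ d : ℕ, D₀ ≤ d →
      a * (d : ℝ) ^ (-(1/2) : ℝ)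
        ≤ Real.Gamma ((d : ℝ) / 2) * (1 - s d ^ 2) ^ (((d : ℝ) - 1) / 2)
            / (2 * Real.sqrt π * Real.Gamma (((d : ℝ) + 1) / 2)) ∧
      Real.Gamma ((d : ℝ) / 2) * (1 - s d ^ 2) ^ (((d : ℝ) - 1) / 2)
            / (2 * Real.sqrt π * Real.Gamma (((d : ℝ) + 1) / 2))
        ≤ b * (d : ℝ) ^ (-(1/2) : ℝ) := by
  exact agrest_expectation_rate_general q ⟨by linarith [hq.1], hq.2⟩ g s hg hcap
end
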